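/- Let K be an algebraically closed field, let n >= 1, and let z in FPF_n(I_n). Then J^ss_z equals the intersection, over all D in FP(z), of the ideals (u_{ij} : (i,j) in D) of R_n generated by the variables indexed by D. -/

import Mathlib

namespace Paper

/-!
We model a permutation of the positive integers `{1, 2, 3, ...}` as an `Equiv.Perm ℕ`
that fixes `0`; all notions below refer only to positive inputs.
-/

/-- The rank `r_w(i,j) = #{a ∈ [i] : w(a) ∈ [j]}` of the `i × j` partial
permutation matrix of `w`, where `[k] = {1, ..., k}`. -/
def rnk (w : Equiv.Perm ℕ) (i j : ℕ) : ℕ :=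
  ((Finset.Icc 1 i).filter fun a => w a ∈ Finset.Icc 1 j).card

/-- Right descent set `Des_R(w) = {i ≥ 1 : w(i) > w(i+1)}`. -/
def DesR (w : Equiv.Perm ℕ) : Set ℕ := {i | 1 ≤ i ∧ w (i + 1) < w i}

/-- Left descent set `Des_L(w) = Des_R(w⁻¹)`. -/
def DesL (w : Equiv.Perm ℕ) : Set ℕ := DesR w⁻¹

/-- `S_∞`: permutations of the positive integers fixing all but finitely many points. -/
def SInfty : Set (Equiv.Perm ℕ) :=
  {w | w 0 = 0 ∧ Set.Finite {i : ℕ | w i ≠ i}}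

/-- `S^{m,n}_∞ = {w ∈ S_∞ : Des_R(w) ⊆ [m], Des_L(w) ⊆ [n]}`. -/
def SmnInfty (m n : ℕ) : Set (Equiv.Perm ℕ) :=
  {w | w ∈ SInfty ∧ DesR w ⊆ Set.Icc 1 m ∧ DesL w ⊆ Set.Icc 1 n}

/-- The Rothe diagram `D(w) = {(i,j) : 0 < j < w(i), 0 < i < w⁻¹(j)}`. -/
def Rothe (w : Equiv.Perm ℕ) : Set (ℕ × ℕ) :=
  {p | 0 < p.2 ∧ p.2 < w p.1 ∧ 0 < p.1 ∧ p.1 < w⁻¹ p.2}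

/-- The function `1_FPF`, sending `i ↦ i - (-1)^i` on positive integers (it fixes `0`). -/
def oneFPF : ℕ → ℕ := fun i => if i % 2 = 1 then i + 1 else i - 1

/-- `I^FPF_∞`: fixed-point-free involutions of the positive integers agreeing with
`1_FPF` at all sufficiently large inputs. -/
def IFPFInfty : Set (Equiv.Perm ℕ) :=
  {z | z 0 = 0 ∧ (∀ i, 1 ≤ i → z i ≠ i) ∧ z * z = 1 ∧ ∃ N, ∀ i, N ≤ i → z i = oneFPF i}

/-- The skew-symmetric Rothe diagram `D^ss(z) = {(i,j) : 0 < j < z(i), j < i < z(j)}`. -/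
def Dss (z : Equiv.Perm ℕ) : Set (ℕ × ℕ) :=
  {p | 0 < p.2 ∧ p.2 < z p.1 ∧ p.2 < p.1 ∧ p.1 < z p.2}

/-- `FPF_n(I_n) = {z ∈ I^FPF_∞ : D^ss(z) ⊆ [n] × [n]}`. -/
def FPFIn (n : ℕ) : Set (Equiv.Perm ℕ) :=
  {z | z ∈ IFPFInfty ∧ Dss z ⊆ Set.Icc 1 n ×ˢ Set.Icc 1 n}

/-- `ℓ_fpf(z) = |D^ss(z)|`. -/
noncomputable def ellFpf (z : Equiv.Perm ℕ) : ℕ := (Dss z).ncard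

/-- Bruhat order on `I^FPF_∞`: reflexive-transitive closure of `z < (i,j) z (i,j)`
whenever `i < j` and `ℓ_fpf` goes up by exactly one. -/
def fpfBruhatLe (z y : Equiv.Perm ℕ) : Prop :=
  Relation.ReflTransGen
    (fun a b => ∃ i j : ℕ, 1 ≤ i ∧ i < j ∧
      b = Equiv.swap i j * a * Equiv.swap i j ∧ ellFpf b = ellFpf a + 1) z y

/-- `i` is a visible descent of `z` if `i ≥ 1` and `z(i+1) < min(i, z(i))`. -/
def visibleDescent (z : Equiv.Perm ℕ) (i : ℕ) : Prop :=
  1 ≤ i ∧ z (i + 1) < min i (z i)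

/-- `Ψ(z, p) = {(p,r) z (p,r) : r > p, ℓ_fpf((p,r) z (p,r)) = ℓ_fpf(z) + 1}`. -/
def PsiSet (z : Equiv.Perm ℕ) (p : ℕ) : Set (Equiv.Perm ℕ) :=
  {y | ∃ r : ℕ, p < r ∧ y = Equiv.swap p r * z * Equiv.swap p r ∧ ellFpf y = ellFpf z + 1}

/-- The dominant component `dom(z) = {(i,j) : i, j ≥ 1, r_z(i,j) = 0}`. -/
def domSet (z : Equiv.Perm ℕ) : Set (ℕ × ℕ) :=
  {p | 1 ≤ p.1 ∧ 1 ≤ p.2 ∧ rnk z p.1 p.2 = 0}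

/-- `(p, q)` is an outer corner of `dom(z)`. -/
def IsOuterCorner (z : Equiv.Perm ℕ) (p q : ℕ) : Prop :=
  1 ≤ p ∧ 1 ≤ q ∧ (p, q) ∉ domSet z ∧
    (p = 1 ∨ (p - 1, q) ∈ domSet z) ∧ (q = 1 ∨ (p, q - 1) ∈ domSet z)

/-- `I_n`: involutions in `S_∞` fixing every `i > n`. -/
def InvolIn (n : ℕ) : Set (Equiv.Perm ℕ) :=
  {w | w 0 = 0 ∧ w * w = 1 ∧ ∀ i, n < i → w i = i}

/-- The fixed points of `z` lying in `[n]`. -/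
def fixedPtsIn (n : ℕ) (z : Equiv.Perm ℕ) : Finset ℕ :=
  (Finset.Icc 1 n).filter fun i => z i = i

/-- The function swapping `m + 2t - 1` and `m + 2t` for every `t ≥ 1`, fixing all other points. -/
def tailSwapFun (m : ℕ) : ℕ → ℕ := fun i =>
  if i ≤ m then i else if (i - m) % 2 = 1 then i + 1 else i - 1

theorem tailSwapFun_involutive (m : ℕ) : Function.Involutive (tailSwapFun m) := by
  intro i
  unfold tailSwapFun
  split_ifs <;> omega

/-- The involution swapping `m + 2t - 1` and `m + 2t` for every `t ≥ 1`. -/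
def tailSwap (m : ℕ) : Equiv.Perm ℕ :=
  Function.Involutive.toPerm _ (tailSwapFun_involutive m)

/-- The fixed-point-free standardization `FPF_n(z) = z ⋅ (i_1,n+1)⋯(i_k,n+k) ⋅ c`,
where `i_1 < ⋯ < i_k` are the fixed points of `z` in `[n]` and `c` swaps
`n+k+2t-1, n+k+2t` for all `t ≥ 1`. -/
noncomputable def fpfStd (n : ℕ) (z : Equiv.Perm ℕ) : Equiv.Perm ℕ :=
  z *
    (List.ofFn fun t : Fin (fixedPtsIn n z).card =>
      Equiv.swap ((fixedPtsIn n z).orderEmbOfFin rfl t) (n + (t : ℕ) + 1)).prod *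
    tailSwap (n + (fixedPtsIn n z).card)

/-- `Mat^ss_n(K)`: skew-symmetric `n × n` matrices (transpose is the negative, zero diagonal).
Row/column index `a : Fin n` corresponds to the (1-indexed) row/column `a + 1`. -/
def MatSS (K : Type*) [CommRing K] (n : ℕ) : Set (Matrix (Fin n) (Fin n) K) :=
  {A | A.transpose = -A ∧ ∀ i, A i i = 0}

/-- The skew-symmetric matrix Schubert variety
`X^ss_z = {A ∈ Mat^ss_n : rank A_{[i][j]} ≤ r_z(i,j) for all i, j ∈ [n]}`. -/
noncomputable def Xss (K : Type*) [Field K] (n : ℕ) (z : Equiv.Perm ℕ) :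
    Set (Matrix (Fin n) (Fin n) K) :=
  {A | A ∈ MatSS K n ∧ ∀ (i j : ℕ) (hi : i ≤ n) (hj : j ≤ n), 1 ≤ i → 1 ≤ j →
    (A.submatrix (Fin.castLE hi) (Fin.castLE hj)).rank ≤ rnk z i j}

/-- `#{(i,j) : i > j, j < z(i), i < z(j)}` for a permutation of `Fin N`
(the `0`-indexed version of `ℓ_fpf`). -/
def ellFpfFin {N : ℕ} (z : Equiv.Perm (Fin N)) : ℕ :=
  (Finset.univ.filter fun p : Fin N × Fin N => p.2 < p.1 ∧ p.2 < z p.1 ∧ p.1 < z p.2).card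

/-- The Pfaffian of an `N × N` matrix:
`pf(A) = ∑_{z fpf involution of [N]} (-1)^{ℓ_fpf(z)} ∏_{z(i) < i} A_{z(i), i}`.
(The sum is empty, hence `0`, when `N` is odd.) -/
noncomputable def Pfaffian {R : Type*} [CommRing R] {N : ℕ} (A : Matrix (Fin N) (Fin N) R) : R :=
  ∑ z ∈ Finset.univ.filter (fun z : Equiv.Perm (Fin N) => (∀ i, z i ≠ i) ∧ ∀ i, z (z i) = i),
    (-1 : R) ^ ellFpfFin z * ∏ i ∈ Finset.univ.filter (fun i : Fin N => z i < i), A (z i) i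

/-- Index set for the variables `u_{ij}`, `n ≥ i > j ≥ 1`, of the coordinate ring
`R_n = K[Mat^ss_n]`; the variable `⟨(a, b), _⟩` is `u_{a+1, b+1}`. -/
abbrev SSVar (n : ℕ) : Type := {p : Fin n × Fin n // p.2 < p.1}

/-- The generic skew-symmetric matrix `U^ss` over `R_n`. -/
noncomputable def Uss (K : Type*) [CommRing K] (n : ℕ) :
    Matrix (Fin n) (Fin n) (MvPolynomial (SSVar n) K) :=
  Matrix.of fun i j =>
    if h : j < i then MvPolynomial.X ⟨(i, j), h⟩
    else if h' : i < j then -MvPolynomial.X ⟨(j, i), h'⟩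
    else 0

/-- The ideal of polynomials vanishing on a set `X`, where a point `A` is evaluated
via `ev A : σ → K`. -/
noncomputable def vanishingIdeal {K : Type*} [CommRing K] {σ M : Type*}
    (X : Set M) (ev : M → σ → K) : Ideal (MvPolynomial σ K) where
  carrier := {f | ∀ A ∈ X, MvPolynomial.eval (ev A) f = 0}
  zero_mem' := by simp
  add_mem' := by
    intro f g hf hg
    simp only [Set.mem_setOf_eq] at *
    intro A hA
    rw [map_add, hf A hA, hg A hA, add_zero]
  smul_mem' := by
    intro c f hf
    simp only [Set.mem_setOf_eq] at *
    intro A hA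
    rw [smul_eq_mul, map_mul, hf A hA, mul_zero]

/-- `I(X^ss_z) ⊆ R_n`, where `u_{ij}` is evaluated at `A` as `A_{ij}`. -/
noncomputable def IXss (K : Type*) [Field K] (n : ℕ) (z : Equiv.Perm ℕ) :
    Ideal (MvPolynomial (SSVar n) K) :=
  vanishingIdeal (Xss K n z) fun A v => A v.1.1 v.1.2

/-- `pf(U^ss_{RR})` for a finite row/column set `R` (listed in increasing order). -/
noncomputable def pfUss (K : Type*) [CommRing K] {n : ℕ} (R : Finset (Fin n)) :
    MvPolynomial (SSVar n) K :=
  Pfaffian ((Uss K n).submatrix (fun s => R.orderEmbOfFin rfl s) fun t => R.orderEmbOfFin rfl t)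

/-- The ideal `I^ss_z`, generated by the Pfaffians `pf(U^ss_{RR})` over all nonempty
even-size `R ⊆ [n]` such that `R ⊆ [i]` and `|R ∩ [j]| > r_z(i,j)` for some `i ≥ j`. -/
noncomputable def IssIdeal (K : Type*) [Field K] (n : ℕ) (z : Equiv.Perm ℕ) :
    Ideal (MvPolynomial (SSVar n) K) :=
  Ideal.span {f : MvPolynomial (SSVar n) K | ∃ R : Finset (Fin n),
    R.Nonempty ∧ Even R.card ∧
    (∃ i j : ℕ, 1 ≤ j ∧ j ≤ i ∧ i ≤ n ∧ (∀ a ∈ R, (a : ℕ) + 1 ≤ i) ∧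
      rnk z i j < (R.filter fun a : Fin n => (a : ℕ) + 1 ≤ j).card) ∧
    f = pfUss K R}

/-- The square-free monomial `u^ss_{AB}`: zero if `A ⊙ B` meets the diagonal, and otherwise
the product of the variables `u_{ij}` over the pairs `i > j` with `(i,j)` or `(j,i)` in
`A ⊙ B = {(a_0, b_r), (a_1, b_{r-1}), ..., (a_r, b_0)}`. -/
noncomputable def ussMon (K : Type*) [CommRing K] {n : ℕ} (A B : Finset (Fin n)) :
    MvPolynomial (SSVar n) K :=
  if h : A.card = B.card then
    if ∃ t : Fin A.card, (A.orderEmbOfFin rfl t : Fin n) = B.orderEmbOfFin h.symm t.rev then 0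
    else
      ∏ v ∈ Finset.univ.filter (fun v : SSVar n => ∃ t : Fin A.card,
          (A.orderEmbOfFin rfl t = v.1.1 ∧ B.orderEmbOfFin h.symm t.rev = v.1.2) ∨
          (A.orderEmbOfFin rfl t = v.1.2 ∧ B.orderEmbOfFin h.symm t.rev = v.1.1)),
        MvPolynomial.X v
  else 0

/-- The monomial ideal `J^ss_r` of a symmetric rank table `r`, generated by the monomials
`u^ss_{AB}` with `A ⊆ [i]`, `B ⊆ [j]`, `|A| = |B| = r(i,j) + 1` for some `n ≥ i ≥ j ≥ 1`. -/
noncomputable def JssIdealOfTable (K : Type*) [CommRing K] (n : ℕ) (r : ℕ → ℕ → ℕ) :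
    Ideal (MvPolynomial (SSVar n) K) :=
  Ideal.span {g : MvPolynomial (SSVar n) K | ∃ (i j : ℕ) (A B : Finset (Fin n)),
    1 ≤ j ∧ j ≤ i ∧ i ≤ n ∧
    (∀ a ∈ A, (a : ℕ) + 1 ≤ i) ∧ (∀ b ∈ B, (b : ℕ) + 1 ≤ j) ∧
    A.card = r i j + 1 ∧ B.card = r i j + 1 ∧ g = ussMon K A B}

/-- `J^ss_z = J^ss_{r_z}`. -/
noncomputable def JssIdeal (K : Type*) [CommRing K] (n : ℕ) (z : Equiv.Perm ℕ) :
    Ideal (MvPolynomial (SSVar n) K) :=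
  JssIdealOfTable K n (rnk z)

/-- Total degree of a monomial (exponent vector). -/
def totalDeg {σ : Type*} (m : σ →₀ ℕ) : ℕ := m.sum fun _ e => e

/-- The lexicographic order on the variables `u_{ij}` by the pair `(i, j)`. -/
def varLT {n : ℕ} (v w : SSVar n) : Prop :=
  v.1.1 < w.1.1 ∨ (v.1.1 = w.1.1 ∧ v.1.2 < w.1.2)

/-- The (graded) reverse lexicographic term order on monomials of `R_n`:
`m₁ < m₂` iff `deg m₁ < deg m₂`, or the degrees agree and the lexicographically largest
variable with different exponents has strictly larger exponent in `m₁`. -/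
def revlexLT {n : ℕ} (m₁ m₂ : SSVar n →₀ ℕ) : Prop :=
  totalDeg m₁ < totalDeg m₂ ∨
    (totalDeg m₁ = totalDeg m₂ ∧ ∃ v, m₂ v < m₁ v ∧ ∀ w, varLT v w → m₁ w = m₂ w)

/-- The initial ideal of `I` with respect to a strict term order `lt`: the ideal
generated by the leading monomials `init(f)` of the nonzero `f ∈ I`. -/
noncomputable def initIdeal {K : Type*} [CommRing K] {σ : Type*}
    (lt : (σ →₀ ℕ) → (σ →₀ ℕ) → Prop) (I : Ideal (MvPolynomial σ K)) :
    Ideal (MvPolynomial σ K) :=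
  Ideal.span {g : MvPolynomial σ K | ∃ f ∈ I, f ≠ 0 ∧ ∃ m : σ →₀ ℕ, m ∈ f.support ∧
    (∀ m' ∈ f.support, m' ≠ m → lt m' m) ∧ g = MvPolynomial.monomial m (1 : K)}

/-- A term order on the monomials of a polynomial ring: a linear order in which `1` is
the unique minimum and multiplication by a fixed monomial preserves order. -/
structure TermOrder (σ : Type*) where
  le : (σ →₀ ℕ) → (σ →₀ ℕ) → Prop
  trans : ∀ a b c, le a b → le b c → le a c
  antisymm : ∀ a b, le a b → le b a → a = b
  total : ∀ a b, le a b ∨ le b a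
  zero_le : ∀ a, le 0 a
  add_le_add_right : ∀ a b c, le a b → le (a + c) (b + c)

/-- The initial ideal of `I` with respect to a term order `τ`. -/
noncomputable def initIdealLe {K : Type*} [CommRing K] {σ : Type*}
    (τ : TermOrder σ) (I : Ideal (MvPolynomial σ K)) : Ideal (MvPolynomial σ K) :=
  Ideal.span {g : MvPolynomial σ K | ∃ f ∈ I, f ≠ 0 ∧ ∃ m : σ →₀ ℕ, m ∈ f.support ∧
    (∀ m' ∈ f.support, τ.le m' m) ∧ g = MvPolynomial.monomial m (1 : K)}

/-- An ideal is homogeneous (w.r.t. total degree) iff it contains all homogeneous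
components of its elements. -/
def IsHomogIdeal {K : Type*} [CommSemiring K] {σ : Type*}
    (I : Ideal (MvPolynomial σ K)) : Prop :=
  ∀ f ∈ I, ∀ d : ℕ, MvPolynomial.homogeneousComponent d f ∈ I

/-- The reading order on boxes: rows top to bottom, each row right to left. -/
def pdRel (p q : ℕ × ℕ) : Prop := p.1 < q.1 ∨ (p.1 = q.1 ∧ q.2 ≤ p.2)

instance : DecidableRel pdRel := fun p q => by unfold pdRel; infer_instance

instance : IsTrans (ℕ × ℕ) pdRel :=
  ⟨fun a b c hab hbc => by unfold pdRel at *; omega⟩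

instance : IsAntisymm (ℕ × ℕ) pdRel :=
  ⟨fun a b hab hba => by
    unfold pdRel at hab hba
    exact Prod.ext_iff.mpr ⟨by omega, by omega⟩⟩

instance : IsTotal (ℕ × ℕ) pdRel :=
  ⟨fun a b => by unfold pdRel; omega⟩

/-- The pipe dream reading word of a finite set `D` of boxes: the letters `i + j - 1`
over `(i, j) ∈ D`, in the order making `(i, -j)` increase lexicographically. -/
def pdWord (D : Finset (ℕ × ℕ)) : List ℕ :=
  (D.sort pdRel).map fun p => p.1 + p.2 - 1

/-- The product `s_{i_1} s_{i_2} ⋯ s_{i_l}` of simple transpositions. -/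
def wordProd (l : List ℕ) : Equiv.Perm ℕ :=
  (l.map fun i => Equiv.swap i (i + 1)).prod

/-- `l` is a reduced word for `w`: a minimal-length word of positive letters whose
product of simple transpositions is `w`. -/
def IsReducedWordOf (w : Equiv.Perm ℕ) (l : List ℕ) : Prop :=
  (∀ a ∈ l, 1 ≤ a) ∧ wordProd l = w ∧
    ∀ l' : List ℕ, (∀ a ∈ l', 1 ≤ a) → wordProd l' = w → l.length ≤ l'.length

/-- The set `RP(w)` of reduced pipe dreams for `w`. -/
def RP (w : Equiv.Perm ℕ) : Set (Finset (ℕ × ℕ)) :=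
  {D | (∀ p ∈ D, 1 ≤ p.1 ∧ 1 ≤ p.2) ∧ IsReducedWordOf w (pdWord D)}

/-- `I^FPF_m`: involutions in `S_∞` that are fixed-point-free on `[m]` and fix
all `i > m`. -/
def IFPFm (m : ℕ) : Set (Equiv.Perm ℕ) :=
  {y | y 0 = 0 ∧ y * y = 1 ∧ (∀ i, 1 ≤ i → i ≤ m → y i ≠ i) ∧ ∀ i, m < i → y i = i}

/-- `z = FPF_m(y)`: `z` agrees with `y` on `[m]` and swaps `m + 2k - 1, m + 2k`
for all `k ≥ 1`. -/
def IsFPFStdOf (m : ℕ) (y z : Equiv.Perm ℕ) : Prop :=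
  (∀ i, i ≤ m → z i = y i) ∧
    ∀ k : ℕ, z (m + 2 * k + 1) = m + 2 * k + 2 ∧ z (m + 2 * k + 2) = m + 2 * k + 1

/-- The set `FP(z)` of fpf-involution pipe dreams for `z ∈ I^FPF_∞`. -/
def FP (z : Equiv.Perm ℕ) : Set (Finset (ℕ × ℕ)) :=
  {E | ∃ (m : ℕ) (y : Equiv.Perm ℕ) (D : Finset (ℕ × ℕ)), Even m ∧ y ∈ IFPFm m ∧
    IsFPFStdOf m y z ∧ D ∈ RP y ∧ D.image Prod.swap = D ∧
    E = D.filter fun p => p.2 < p.1}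

/-- The minor `det(U_{AB})` of the generic `m × n` matrix `U`, with rows `A` and
columns `B` listed in increasing order. -/
noncomputable def genMinor (K : Type*) [CommRing K] {m n : ℕ}
    (A : Finset (Fin m)) (B : Finset (Fin n)) (h : A.card = B.card) :
    MvPolynomial (Fin m × Fin n) K :=
  (Matrix.of fun s t : Fin A.card =>
    (MvPolynomial.X (A.orderEmbOfFin rfl s, B.orderEmbOfFin h.symm t) :
      MvPolynomial (Fin m × Fin n) K)).det

/-- The antidiagonal monomial `u_{AB} = ∏_{(a,b) ∈ A ⊙ B} u_{ab}`. -/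
noncomputable def genMon (K : Type*) [CommRing K] {m n : ℕ}
    (A : Finset (Fin m)) (B : Finset (Fin n)) (h : A.card = B.card) :
    MvPolynomial (Fin m × Fin n) K :=
  ∏ t : Fin A.card, MvPolynomial.X (A.orderEmbOfFin rfl t, B.orderEmbOfFin h.symm t.rev)

/-- The exponent vector of the antidiagonal monomial `u_{AB}`. -/
noncomputable def antidiagExp {m n : ℕ} (A : Finset (Fin m)) (B : Finset (Fin n))
    (h : A.card = B.card) : (Fin m × Fin n) →₀ ℕ :=
  ∑ t : Fin A.card, Finsupp.single (A.orderEmbOfFin rfl t, B.orderEmbOfFin h.symm t.rev) 1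

/-- The ideal `I_w`, generated by the minors `det(U_{AB})` with `A ⊆ [i]`, `B ⊆ [j]`,
`|A| = |B| = r_w(i,j) + 1` for some `(i,j) ∈ [m] × [n]`. -/
noncomputable def IwIdeal (K : Type*) [Field K] (m n : ℕ) (w : Equiv.Perm ℕ) :
    Ideal (MvPolynomial (Fin m × Fin n) K) :=
  Ideal.span {g : MvPolynomial (Fin m × Fin n) K |
    ∃ (i j : ℕ) (A : Finset (Fin m)) (B : Finset (Fin n)) (h : A.card = B.card),
      1 ≤ i ∧ i ≤ m ∧ 1 ≤ j ∧ j ≤ n ∧ (∀ a ∈ A, (a : ℕ) + 1 ≤ i) ∧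
      (∀ b ∈ B, (b : ℕ) + 1 ≤ j) ∧ A.card = rnk w i j + 1 ∧ g = genMinor K A B h}

/-- The monomial ideal `J_w`, generated by the monomials `u_{AB}` with `A ⊆ [i]`,
`B ⊆ [j]`, `|A| = |B| = r_w(i,j) + 1` for some `(i,j) ∈ [m] × [n]`. -/
noncomputable def JwIdeal (K : Type*) [Field K] (m n : ℕ) (w : Equiv.Perm ℕ) :
    Ideal (MvPolynomial (Fin m × Fin n) K) :=
  Ideal.span {g : MvPolynomial (Fin m × Fin n) K |
    ∃ (i j : ℕ) (A : Finset (Fin m)) (B : Finset (Fin n)) (h : A.card = B.card),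
      1 ≤ i ∧ i ≤ m ∧ 1 ≤ j ∧ j ≤ n ∧ (∀ a ∈ A, (a : ℕ) + 1 ≤ i) ∧
      (∀ b ∈ B, (b : ℕ) + 1 ≤ j) ∧ A.card = rnk w i j + 1 ∧ g = genMon K A B h}

/-- The matrix Schubert variety
`X_w = {A ∈ Mat_{m×n} : rank A_{[i][j]} ≤ r_w(i,j) for all (i,j) ∈ [m] × [n]}`. -/
noncomputable def Xw (K : Type*) [Field K] (m n : ℕ) (w : Equiv.Perm ℕ) :
    Set (Matrix (Fin m) (Fin n) K) :=
  {A | ∀ (i j : ℕ) (hi : i ≤ m) (hj : j ≤ n), 1 ≤ i → 1 ≤ j →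
    (A.submatrix (Fin.castLE hi) (Fin.castLE hj)).rank ≤ rnk w i j}

/-- `I(X_w)`: the ideal of polynomials vanishing on `X_w`. -/
noncomputable def IXw (K : Type*) [Field K] (m n : ℕ) (w : Equiv.Perm ℕ) :
    Ideal (MvPolynomial (Fin m × Fin n) K) :=
  vanishingIdeal (Xw K m n w) fun A v => A v.1 v.2

/-- The variable `u_{pq}` (with `1 ≤ q < p ≤ n`) of `R_n`. -/
def ssvar {n : ℕ} (p q : ℕ) (hp : p ≤ n) (hq : 1 ≤ q) (hqp : q < p) : SSVar n :=
  ⟨(⟨p - 1, by omega⟩, ⟨q - 1, by omega⟩), Fin.mk_lt_mk.mpr (by omega)⟩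

/-- Index set for the variables `u_{ij}`, `i > j ≥ 1`, over all positive integers. -/
abbrev PVar : Type := {p : ℕ × ℕ // 1 ≤ p.2 ∧ p.2 < p.1}

/-- The generic skew-symmetric array `U^ss` over the positive integers:
`u_{xy}` if `x > y`, `-u_{yx}` if `x < y`, `0` if `x = y`. -/
noncomputable def UssP (K : Type*) [CommRing K] (x y : ℕ) : MvPolynomial PVar K :=
  if h : 1 ≤ y ∧ y < x then MvPolynomial.X ⟨(x, y), h⟩
  else if h' : 1 ≤ x ∧ x < y then -MvPolynomial.X ⟨(y, x), h'⟩
  else 0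

/-- `pf(U^ss_{RR})` for a finite set `R` of positive integers. -/
noncomputable def pfUssP (K : Type*) [CommRing K] (R : Finset ℕ) : MvPolynomial PVar K :=
  Pfaffian (Matrix.of fun s t : Fin R.card =>
    UssP K (R.orderEmbOfFin rfl s) (R.orderEmbOfFin rfl t))

/-- `g_{AB}`: the Pfaffian of the `(|B|+|A|) × (|B|+|A|)` skew-symmetric matrix whose
rows and columns are labeled by `B` (increasing) followed by `A` (increasing), with
entry `U^ss_{xy}` at a position labeled `(x, y)`, except that the entry is `0` when
both labels come from the `A`-block. -/
noncomputable def gAB (K : Type*) [CommRing K] (A B : Finset ℕ) : MvPolynomial PVar K :=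
  Pfaffian ((Matrix.of fun p q : Fin B.card ⊕ Fin A.card =>
      match p, q with
      | Sum.inl s, Sum.inl t => UssP K (B.orderEmbOfFin rfl s) (B.orderEmbOfFin rfl t)
      | Sum.inl s, Sum.inr t => UssP K (B.orderEmbOfFin rfl s) (A.orderEmbOfFin rfl t)
      | Sum.inr s, Sum.inl t => UssP K (A.orderEmbOfFin rfl s) (B.orderEmbOfFin rfl t)
      | Sum.inr _, Sum.inr _ => (0 : MvPolynomial PVar K)).submatrix
    finSumFinEquiv.symm finSumFinEquiv.symm)

/-- The exponent of the sign `⟨T, S⟩ = (-1)^{|S||T| + C(|S|,2) + ∑ of the (1-indexed)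
positions in the increasing enumeration of `T` occupied by elements of `S`}`. -/
def setSgnExp (T S : Finset ℕ) : ℕ :=
  S.card * T.card + Nat.choose S.card 2 +
    ∑ t : Fin T.card, if T.orderEmbOfFin rfl t ∈ S then (t : ℕ) + 1 else 0



/-! ### Ranks -/

theorem rnk_zero (w : Equiv.Perm ℕ) (l : ℕ) : rnk w 0 l = 0 := by
  simp [rnk]

theorem rnk_succ (w : Equiv.Perm ℕ) (k l : ℕ) :
    rnk w (k + 1) l = rnk w k l + if 1 ≤ w (k + 1) ∧ w (k + 1) ≤ l then 1 else 0 := by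
  unfold rnk
  rw [Finset.card_filter, Finset.card_filter,
    Finset.sum_Icc_succ_top (by omega : 1 ≤ k + 1)]
  simp [Finset.mem_Icc]

theorem rnk_congr {w w' : Equiv.Perm ℕ} {k : ℕ} (l : ℕ)
    (h : ∀ a, 1 ≤ a → a ≤ k → w a = w' a) : rnk w k l = rnk w' k l := by
  unfold rnk
  congr 1
  apply Finset.filter_congr
  intro a ha
  rw [Finset.mem_Icc] at ha
  rw [h a ha.1 ha.2]

theorem rnk_inv (w : Equiv.Perm ℕ) (k l : ℕ) : rnk w⁻¹ l k = rnk w k l := by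
  unfold rnk
  apply Finset.card_nbij' (fun b => w⁻¹ b) (fun a => w a)
  · intro b hb
    simp only [Finset.coe_filter, Finset.mem_Icc, Set.mem_setOf_eq] at hb ⊢
    exact ⟨hb.2, by simpa using hb.1⟩
  · intro b hb
    simp only [Finset.coe_filter, Finset.mem_Icc, Set.mem_setOf_eq] at hb ⊢
    exact ⟨hb.2, by simpa using hb.1⟩
  · intro b _; simp
  · intro b _; simp

theorem rnk_mul_swap (w : Equiv.Perm ℕ) {k k' : ℕ} (hk : 1 ≤ k) (h : k' ≠ k) (l : ℕ) :
    rnk (w * Equiv.swap k (k + 1)) k' l = rnk w k' l := by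
  rcases lt_or_gt_of_ne h with h | h
  · apply rnk_congr
    intro a _ ha
    rw [Equiv.Perm.mul_apply, Equiv.swap_apply_of_ne_of_ne (by omega) (by omega)]
  · unfold rnk
    apply Finset.card_nbij' (fun b => Equiv.swap k (k + 1) b) (fun b => Equiv.swap k (k + 1) b)
    · intro b hb
      simp only [Finset.coe_filter, Finset.mem_Icc, Set.mem_setOf_eq, Equiv.Perm.mul_apply] at hb ⊢
      refine ⟨?_, hb.2⟩
      rw [Equiv.swap_apply_def]
      split_ifs <;> omega
    · intro b hb
      simp only [Finset.coe_filter, Finset.mem_Icc, Set.mem_setOf_eq, Equiv.Perm.mul_apply,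
        Equiv.swap_apply_self] at hb ⊢
      refine ⟨?_, hb.2⟩
      rw [Equiv.swap_apply_def]
      split_ifs <;> omega
    · intro b _; simp
    · intro b _; simp

theorem rnk_even {y : Equiv.Perm ℕ} {k : ℕ} (h2 : y * y = 1)
    (hf : ∀ i, 1 ≤ i → i ≤ k → y i ≠ i) : Even (rnk y k k) := by
  have hyy : ∀ i, y (y i) = i := fun i => by
    rw [← Equiv.Perm.mul_apply, h2]; rfl
  have : ((rnk y k k : ℕ) : ZMod 2) = 0 := by
    unfold rnk
    rw [Finset.card_eq_sum_ones, Nat.cast_sum]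
    apply Finset.sum_involution (fun a _ => y a)
    · intro a _; decide
    · intro a ha _
      simp only [Finset.mem_filter, Finset.mem_Icc] at ha
      exact hf a ha.1.1 ha.1.2
    · intro a ha
      simp only [Finset.mem_filter, Finset.mem_Icc] at ha ⊢
      rw [hyy]
      exact ⟨ha.2, ha.1⟩
    · intro a _; exact hyy a
  rw [ZMod.natCast_eq_zero_iff] at this
  exact even_iff_two_dvd.mpr this

/-! ### Antidiagonal chains -/

/-- Strict antidiagonal chains of boxes. -/
def Chn (C : Finset (ℕ × ℕ)) : Prop :=
  ∀ x ∈ C, ∀ y ∈ C, x = y ∨ (x.1 < y.1 ∧ y.2 < x.2) ∨ (y.1 < x.1 ∧ x.2 < y.2)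

theorem Chn.subset {C C' : Finset (ℕ × ℕ)} (h : Chn C) (hs : C' ⊆ C) : Chn C' :=
  fun x hx y hy => h x (hs hx) y (hs hy)

theorem Chn.swap {C : Finset (ℕ × ℕ)} (h : Chn C) : Chn (C.image Prod.swap) := by
  intro x hx y hy
  rw [Finset.mem_image] at hx hy
  obtain ⟨x, hx, rfl⟩ := hx
  obtain ⟨y, hy, rfl⟩ := hy
  rcases h x hx y hy with h | h | h
  · left; rw [h]
  · right; right; exact ⟨h.2, h.1⟩
  · right; left; exact ⟨h.2, h.1⟩

theorem Chn.insert {C : Finset (ℕ × ℕ)} (h : Chn C) (c : ℕ × ℕ)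
    (hc : ∀ x ∈ C, x.1 < c.1 ∧ c.2 < x.2) : Chn (insert c C) := by
  intro x hx y hy
  rw [Finset.mem_insert] at hx hy
  rcases hx with rfl | hx <;> rcases hy with rfl | hy
  · left; rfl
  · right; right; exact hc y hy
  · right; left; exact hc x hx
  · exact h x hx y hy

theorem Chn.card_le_cols {C : Finset (ℕ × ℕ)} (h : Chn C) {a b : ℕ}
    (hc : ∀ x ∈ C, a < x.2 ∧ x.2 ≤ b) : C.card ≤ b - a := by
  rw [← Nat.card_Ioc]
  apply Finset.card_le_card_of_injOn Prod.snd
  · intro x hx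
    simpa using hc x hx
  · intro x hx y hy hxy
    rcases h x hx y hy with h | h | h
    · exact h
    · omega
    · omega

theorem card_image_swap (C : Finset (ℕ × ℕ)) : (C.image Prod.swap).card = C.card :=
  Finset.card_image_of_injective _ Prod.swap_injective

theorem Chn.card_le_rows {C : Finset (ℕ × ℕ)} (h : Chn C) {a b : ℕ}
    (hc : ∀ x ∈ C, a < x.1 ∧ x.1 ≤ b) : C.card ≤ b - a := by
  rw [← card_image_swap]
  apply h.swap.card_le_cols
  intro x hx
  rw [Finset.mem_image] at hx
  obtain ⟨x, hx, rfl⟩ := hx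
  exact hc x hx

theorem Chn.double {L : Finset (ℕ × ℕ)} (h : Chn L) (hl : ∀ x ∈ L, x.2 < x.1) :
    Chn (L ∪ L.image Prod.swap) ∧ (L ∪ L.image Prod.swap).card = 2 * L.card := by
  constructor
  · have key : ∀ x ∈ L, ∀ y ∈ L, y.2 < x.1 ∧ x.2 < y.1 := by
      intro x hx y hy
      have h1 := hl x hx
      have h2 := hl y hy
      rcases h x hx y hy with h | h | h
      · subst h; omega
      · omega
      · omega
    intro x hx y hy
    rw [Finset.mem_union] at hx hy
    rcases hx with hx | hx <;> rcases hy with hy | hy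
    · exact h x hx y hy
    · rw [Finset.mem_image] at hy
      obtain ⟨y, hy, rfl⟩ := hy
      right; right; exact key x hx y hy
    · rw [Finset.mem_image] at hx
      obtain ⟨x, hx, rfl⟩ := hx
      right; left; exact key y hy x hx
    · exact h.swap x hx y hy
  · rw [Finset.card_union_of_disjoint, card_image_swap]
    · omega
    · rw [Finset.disjoint_left]
      intro x hx hx'
      rw [Finset.mem_image] at hx'
      obtain ⟨y, hy, rfl⟩ := hx'
      have h1 := hl _ hx
      have h2 := hl _ hy
      simp only [Prod.snd_swap, Prod.fst_swap] at h1
      omega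

theorem Chn.grow {C : Finset (ℕ × ℕ)} (h : Chn C) {B : ℕ × ℕ → Prop}
    (hB : ∀ x, B x → B x.swap) (hd : ∀ x : ℕ × ℕ, x.1 = x.2 → B x) {lo hi : ℕ}
    (hc : ∀ x ∈ C, ¬ B x ∧ lo < x.1 ∧ x.1 ≤ hi ∧ lo < x.2 ∧ x.2 ≤ hi) (hodd : Odd C.card) :
    ∃ C' : Finset (ℕ × ℕ), Chn C' ∧
      (∀ x ∈ C', ¬ B x ∧ lo < x.1 ∧ x.1 ≤ hi ∧ lo < x.2 ∧ x.2 ≤ hi) ∧ C.card + 1 ≤ C'.card := by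
  have aux : ∀ C : Finset (ℕ × ℕ), Chn C →
      (∀ x ∈ C, ¬ B x ∧ lo < x.1 ∧ x.1 ≤ hi ∧ lo < x.2 ∧ x.2 ≤ hi) →
      C.card < 2 * (C.filter fun x => x.2 < x.1).card →
      ∃ C' : Finset (ℕ × ℕ), Chn C' ∧
      (∀ x ∈ C', ¬ B x ∧ lo < x.1 ∧ x.1 ≤ hi ∧ lo < x.2 ∧ x.2 ≤ hi) ∧
        C.card + 1 ≤ C'.card := by
    intro C h hc hlt
    obtain ⟨h1, h2⟩ := (h.subset (Finset.filter_subset (fun x => x.2 < x.1) C)).double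
      (by intro x hx; exact (Finset.mem_filter.mp hx).2)
    refine ⟨_, h1, ?_, by omega⟩
    intro x hx
    rw [Finset.mem_union] at hx
    rcases hx with hx | hx
    · exact hc x (Finset.mem_filter.mp hx).1
    · rw [Finset.mem_image] at hx
      obtain ⟨y, hy, rfl⟩ := hx
      obtain ⟨g1, g2, g3, g4, g5⟩ := hc y (Finset.mem_filter.mp hy).1
      exact ⟨fun hb => g1 (by simpa using hB _ hb), g4, g5, g2, g3⟩
  by_cases hlt : C.card < 2 * (C.filter fun x => x.2 < x.1).card
  · exact aux C h hc hlt
  · have h1 := Finset.card_filter_add_card_filter_not (s := C) (fun x => x.2 < x.1)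
    have h2 : ((C.image Prod.swap).filter fun x => x.2 < x.1).card
        = (C.filter fun x => ¬ x.2 < x.1).card := by
      rw [Finset.filter_image, card_image_swap]
      congr 1
      apply Finset.filter_congr
      intro x hx
      have : x.1 ≠ x.2 := fun e => (hc x hx).1 (hd x e)
      simp only [Prod.snd_swap, Prod.fst_swap]
      omega
    obtain ⟨C', g1, g2, g3⟩ := aux (C.image Prod.swap) h.swap (by
      intro x hx
      rw [Finset.mem_image] at hx
      obtain ⟨y, hy, rfl⟩ := hx
      obtain ⟨g1, g2, g3, g4, g5⟩ := hc y hy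
      exact ⟨fun hb => g1 (by simpa using hB _ hb), g4, g5, g2, g3⟩) (by
      rw [h2, card_image_swap]
      obtain ⟨t, ht⟩ := hodd
      omega)
    rw [card_image_swap] at g3
    exact ⟨C', g1, g2, g3⟩

/-! ### Inversions -/

/-- Inversion set. -/
def InvS (w : Equiv.Perm ℕ) : Set (ℕ × ℕ) := {x | x.1 < x.2 ∧ w x.2 < w x.1}

theorem swapPair_inj (k : ℕ) : Function.Injective
    (fun x : ℕ × ℕ => (Equiv.swap k (k + 1) x.1, Equiv.swap k (k + 1) x.2)) := by
  intro x y h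
  simp only [Prod.mk.injEq, EmbeddingLike.apply_eq_iff_eq] at h
  exact Prod.ext h.1 h.2

theorem InvS_mul_swap (w : Equiv.Perm ℕ) (k : ℕ) :
    InvS (w * Equiv.swap k (k + 1)) ⊆ insert (k, k + 1)
      ((fun x : ℕ × ℕ => (Equiv.swap k (k + 1) x.1, Equiv.swap k (k + 1) x.2)) '' InvS w) := by
  rintro ⟨a, b⟩ ⟨h1, h2⟩
  simp only [Equiv.Perm.mul_apply] at h1 h2
  by_cases h : (a, b) = (k, k + 1)
  · left; exact h
  · right
    refine ⟨(Equiv.swap k (k + 1) a, Equiv.swap k (k + 1) b), ⟨?_, h2⟩, by simp⟩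
    simp only [Prod.mk.injEq, not_and] at h
    simp only [Equiv.swap_apply_def]
    split_ifs <;> omega

theorem InvS_fin_mul_swap {w : Equiv.Perm ℕ} (k : ℕ) (h : (InvS w).Finite) :
    (InvS (w * Equiv.swap k (k + 1))).Finite ∧
      (InvS (w * Equiv.swap k (k + 1))).ncard ≤ (InvS w).ncard + 1 := by
  have hf : (insert (k, k + 1)
      ((fun x : ℕ × ℕ => (Equiv.swap k (k + 1) x.1, Equiv.swap k (k + 1) x.2)) '' InvS w)).Finite :=
    (h.image _).insert _
  refine ⟨hf.subset (InvS_mul_swap w k), ?_⟩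
  refine (Set.ncard_le_ncard (InvS_mul_swap w k) hf).trans ?_
  refine (Set.ncard_insert_le _ _).trans ?_
  rw [Set.ncard_image_of_injective _ (swapPair_inj k)]

theorem InvS_asc {w : Equiv.Perm ℕ} {k : ℕ} (h : (InvS w).Finite) (hk : w k < w (k + 1)) :
    (InvS w).ncard + 1 ≤ (InvS (w * Equiv.swap k (k + 1))).ncard := by
  have hn : (k, k + 1) ∉
      ((fun x : ℕ × ℕ => (Equiv.swap k (k + 1) x.1, Equiv.swap k (k + 1) x.2)) '' InvS w) := by
    rintro ⟨⟨a, b⟩, ⟨h1, h2⟩, h3⟩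
    simp only [Prod.mk.injEq] at h1 h2 h3
    obtain ⟨h3, h4⟩ := h3
    simp only [Equiv.swap_apply_def] at h3 h4
    split_ifs at h3 h4 <;> omega
  rw [← Set.ncard_image_of_injective _ (swapPair_inj k), ← Set.ncard_insert_of_notMem hn (h.image _)]
  apply Set.ncard_le_ncard _ (InvS_fin_mul_swap k h).1
  intro x hx
  rcases hx with rfl | ⟨⟨a, b⟩, ⟨h1, h2⟩, rfl⟩
  · refine ⟨by simp, ?_⟩
    simpa using hk
  · simp only at h1 h2
    refine ⟨?_, by simpa using h2⟩
    have : ¬ (a = k ∧ b = k + 1) := by rintro ⟨rfl, rfl⟩; omega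
    simp only [Equiv.swap_apply_def]
    split_ifs <;> omega

theorem InvS_inv (w : Equiv.Perm ℕ) :
    InvS w⁻¹ = (fun x : ℕ × ℕ => (w x.2, w x.1)) '' InvS w := by
  ext ⟨a, b⟩
  constructor
  · rintro ⟨h1, h2⟩
    exact ⟨(w⁻¹ b, w⁻¹ a), ⟨h2, by simpa using h1⟩, by simp⟩
  · rintro ⟨⟨c, d⟩, ⟨h1, h2⟩, h3⟩
    simp only [Prod.mk.injEq] at h1 h2 h3
    obtain ⟨rfl, rfl⟩ := h3
    exact ⟨h2, by simpa using h1⟩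

theorem InvS_inv_fin {w : Equiv.Perm ℕ} (h : (InvS w).Finite) : (InvS w⁻¹).Finite := by
  rw [InvS_inv]; exact h.image _

theorem InvS_inv_ncard (w : Equiv.Perm ℕ) : (InvS w⁻¹).ncard = (InvS w).ncard := by
  rw [InvS_inv]
  apply Set.ncard_image_of_injective
  intro x y h
  simp only [Prod.mk.injEq, EmbeddingLike.apply_eq_iff_eq] at h
  exact Prod.ext h.2 h.1

theorem wordProd_nil : wordProd [] = 1 := by simp [wordProd]

theorem wordProd_append (l l' : List ℕ) : wordProd (l ++ l') = wordProd l * wordProd l' := by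
  simp [wordProd]

theorem wordProd_singleton (k : ℕ) : wordProd [k] = Equiv.swap k (k + 1) := by simp [wordProd]

theorem InvS_word (l : List ℕ) :
    (InvS (wordProd l)).Finite ∧ (InvS (wordProd l)).ncard ≤ l.length := by
  induction l using List.reverseRecOn with
  | nil =>
    have : InvS (wordProd []) = ∅ := by
      ext x
      simp only [InvS, wordProd_nil, Equiv.Perm.coe_one, id, Set.mem_setOf_eq,
        Set.mem_empty_iff_false, iff_false]
      omega
    rw [this]; simp
  | append_singleton l k ih =>
    rw [wordProd_append, wordProd_singleton]
    obtain ⟨h1, h2⟩ := InvS_fin_mul_swap k ih.1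
    refine ⟨h1, ?_⟩
    simp only [List.length_append, List.length_singleton]
    omega

theorem InvS_conj {y : Equiv.Perm ℕ} {k : ℕ} (hy : y * y = 1) (h : (InvS y).Finite)
    (hk : y k < y (k + 1)) (hne : y k ≠ k) :
    (InvS y).ncard + 2 ≤ (InvS (Equiv.swap k (k + 1) * y * Equiv.swap k (k + 1))).ncard := by
  have hyi : y⁻¹ = y := by rw [inv_eq_iff_mul_eq_one]; exact hy
  have h1 := InvS_asc h hk
  have h2 := (InvS_fin_mul_swap k h).1
  have e : (y * Equiv.swap k (k + 1))⁻¹ = Equiv.swap k (k + 1) * y := by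
    rw [mul_inv_rev, hyi, Equiv.swap_inv]
  have h3 := InvS_inv_fin h2
  have h4 := InvS_inv_ncard (y * Equiv.swap k (k + 1))
  rw [e] at h3 h4
  have h5 := InvS_asc (k := k) h3 (by
    simp only [Equiv.Perm.mul_apply]
    have hyy : ∀ i, y (y i) = i := fun i => by rw [← Equiv.Perm.mul_apply, hy]; rfl
    have : y (k + 1) ≠ k := by
      intro e
      have := hyy (k + 1)
      rw [e] at this
      omega
    simp only [Equiv.swap_apply_def]
    split_ifs <;> omega)
  omega

/-! ### Reading words -/

theorem sort_union_pd (A B : Finset (ℕ × ℕ)) (h : ∀ a ∈ A, ∀ b ∈ B, pdRel a b ∧ a ≠ b) :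
    (A ∪ B).sort pdRel = A.sort pdRel ++ B.sort pdRel := by
  apply List.Perm.eq_of_pairwise (le := pdRel)
  · intro a b _ _ h1 h2
    exact antisymm h1 h2
  · exact Finset.pairwise_sort _ _
  · rw [List.pairwise_append]
    refine ⟨Finset.pairwise_sort _ _, Finset.pairwise_sort _ _, ?_⟩
    intro a ha b hb
    rw [Finset.mem_sort] at ha hb
    exact (h a ha b hb).1
  · rw [List.perm_ext_iff_of_nodup (Finset.sort_nodup _ _)]
    · intro a; simp
    · rw [List.nodup_append]
      refine ⟨Finset.sort_nodup _ _, Finset.sort_nodup _ _, ?_⟩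
      intro a ha b hb
      rw [Finset.mem_sort] at ha hb
      exact (h a ha b hb).2

theorem pdWord_union (A B : Finset (ℕ × ℕ)) (h : ∀ a ∈ A, ∀ b ∈ B, pdRel a b ∧ a ≠ b) :
    pdWord (A ∪ B) = pdWord A ++ pdWord B := by
  simp [pdWord, sort_union_pd A B h]

theorem pdWord_single (q : ℕ × ℕ) : pdWord {q} = [q.1 + q.2 - 1] := by
  simp [pdWord]

theorem mem_pdWord {D : Finset (ℕ × ℕ)} {a : ℕ} (h : a ∈ pdWord D) :
    ∃ p ∈ D, p.1 + p.2 - 1 = a := by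
  simpa [pdWord] using h

theorem wordProd_comm (l : List ℕ) (k : ℕ) (h : ∀ a ∈ l, k + 2 ≤ a ∨ a + 2 ≤ k) :
    wordProd l * Equiv.swap k (k + 1) = Equiv.swap k (k + 1) * wordProd l := by
  induction l with
  | nil => simp [wordProd_nil]
  | cons a l ih =>
    have e : wordProd (a :: l) = Equiv.swap a (a + 1) * wordProd l := by simp [wordProd]
    have h1 := h a (by simp)
    have c : Equiv.swap a (a + 1) * Equiv.swap k (k + 1)
        = Equiv.swap k (k + 1) * Equiv.swap a (a + 1) := by
      ext i
      simp only [Equiv.Perm.mul_apply, Equiv.swap_apply_def]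
      split_ifs <;> omega
    rw [e, mul_assoc, ih (fun b hb => h b (by simp [hb])), ← mul_assoc, c, mul_assoc]

theorem pd_split (D : Finset (ℕ × ℕ)) (q : ℕ × ℕ) (hq : q ∉ D) :
    pdWord D = pdWord (D.filter fun p => pdRel p q) ++ pdWord (D.filter fun p => ¬ pdRel p q) ∧
    pdWord (insert q D) = pdWord (D.filter fun p => pdRel p q) ++ ([q.1 + q.2 - 1] ++
      pdWord (D.filter fun p => ¬ pdRel p q)) := by
  constructor
  · rw [← pdWord_union, Finset.filter_union_filter_not_eq]
    intro a ha b hb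
    rw [Finset.mem_filter] at ha hb
    refine ⟨?_, fun e => hb.2 (e ▸ ha.2)⟩
    have h1 := ha.2
    have h2 := hb.2
    unfold pdRel at *
    omega
  · rw [← pdWord_single, ← pdWord_union, ← pdWord_union]
    · congr 1
      ext p
      simp only [Finset.mem_insert, Finset.mem_union, Finset.mem_filter, Finset.mem_singleton]
      tauto
    · intro a ha b hb
      rw [Finset.mem_union, Finset.mem_singleton, Finset.mem_filter] at hb
      rw [Finset.mem_filter] at ha
      rcases hb with rfl | hb
      · exact ⟨ha.2, fun e => hq (e ▸ ha.1)⟩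
      · refine ⟨?_, fun e => hb.2 (e ▸ ha.2)⟩
        have h1 := ha.2
        have h2 := hb.2
        unfold pdRel at *
        omega
    · intro a ha b hb
      rw [Finset.mem_singleton] at ha
      rw [Finset.mem_filter] at hb
      subst ha
      refine ⟨?_, fun e => hq (e ▸ hb.1)⟩
      have h2 := hb.2
      unfold pdRel at *
      omega

theorem wordProd_insert_sw (D : Finset (ℕ × ℕ)) (q : ℕ × ℕ)
    (hpos : 1 ≤ q.1 ∧ 1 ≤ q.2)
    (h : ∀ p ∈ D, p.1 < q.1 ∨ q.2 < p.2) :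
    wordProd (pdWord (insert q D)) =
      wordProd (pdWord D) * Equiv.swap (q.1 + q.2 - 1) (q.1 + q.2 - 1 + 1) := by
  have hq : q ∉ D := fun hq => by have := h q hq; omega
  obtain ⟨h1, h2⟩ := pd_split D q hq
  rw [h1, h2]
  simp only [wordProd_append, wordProd_singleton]
  rw [mul_assoc, wordProd_comm]
  intro a ha
  obtain ⟨p, hp, rfl⟩ := mem_pdWord ha
  rw [Finset.mem_filter] at hp
  have g := h p hp.1
  have g2 := hp.2
  unfold pdRel at g2
  omega

theorem wordProd_insert_ne (D : Finset (ℕ × ℕ)) (q : ℕ × ℕ)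
    (hpos : 1 ≤ q.1 ∧ 1 ≤ q.2) (hD : ∀ p ∈ D, 1 ≤ p.1 ∧ 1 ≤ p.2)
    (h : ∀ p ∈ D, q.1 < p.1 ∨ p.2 < q.2) :
    wordProd (pdWord (insert q D)) =
      Equiv.swap (q.1 + q.2 - 1) (q.1 + q.2 - 1 + 1) * wordProd (pdWord D) := by
  have hq : q ∉ D := fun hq => by have := h q hq; omega
  obtain ⟨h1, h2⟩ := pd_split D q hq
  rw [h1, h2]
  simp only [wordProd_append, wordProd_singleton]
  rw [← mul_assoc, wordProd_comm, mul_assoc]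
  intro a ha
  obtain ⟨p, hp, rfl⟩ := mem_pdWord ha
  rw [Finset.mem_filter] at hp
  have g := h p hp.1
  have g2 := hp.2
  have g3 := hD p hp.1
  unfold pdRel at g2
  omega

theorem length_pdWord (D : Finset (ℕ × ℕ)) : (pdWord D).length = D.card := by
  simp [pdWord]

theorem exists_last (D : Finset (ℕ × ℕ)) (hD : D.Nonempty) :
    ∃ q ∈ D, ∀ p ∈ D, p ≠ q → p.1 < q.1 ∨ (p.1 = q.1 ∧ q.2 < p.2) := by
  obtain ⟨a, ha, hm⟩ := Finset.exists_max_image D Prod.fst hD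
  obtain ⟨q, hq, hm2⟩ := Finset.exists_min_image (D.filter fun p => p.1 = a.1) Prod.snd
    ⟨a, Finset.mem_filter.mpr ⟨ha, rfl⟩⟩
  rw [Finset.mem_filter] at hq
  refine ⟨q, hq.1, ?_⟩
  intro p hp hne
  have h1 := hm p hp
  rw [← hq.2] at h1
  rcases lt_or_eq_of_le h1 with h1 | h1
  · left; exact h1
  · right
    refine ⟨h1, ?_⟩
    have h2 := hm2 p (Finset.mem_filter.mpr ⟨hp, h1.trans hq.2⟩)
    rcases lt_or_eq_of_le h2 with h2 | h2
    · exact h2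
    · exact absurd (Prod.ext h1 h2.symm) hne

theorem chain_le_word_aux (N : ℕ) : ∀ D : Finset (ℕ × ℕ), D.card = N →
    (∀ p ∈ D, 1 ≤ p.1 ∧ 1 ≤ p.2) →
    ∀ i c j : ℕ, c ≤ j → (∀ p ∈ D, p.1 ≤ i ∨ c < p.2) →
    ∀ C : Finset (ℕ × ℕ), Chn C →
    (∀ x ∈ C, x ∉ D ∧ 1 ≤ x.1 ∧ x.1 ≤ i ∧ c < x.2 ∧ x.2 ≤ j) →
    c + C.card ≤ rnk (wordProd (pdWord D)) (i + c) j := by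
  induction N with
  | zero =>
    intro D hD _ i c j hcj _ C hC hC2
    rw [Finset.card_eq_zero] at hD
    subst hD
    have e : wordProd (pdWord ∅) = 1 := by simp [pdWord, wordProd_nil]
    have h1 := hC.card_le_cols (a := c) (b := j) (fun x hx => (hC2 x hx).2.2.2)
    have h2 := hC.card_le_rows (a := 0) (b := i) (fun x hx => by have := hC2 x hx; omega)
    rw [e]
    have : rnk 1 (i + c) j = min (i + c) j := by
      unfold rnk
      have : (Finset.Icc 1 (i + c)).filter (fun a => (1 : Equiv.Perm ℕ) a ∈ Finset.Icc 1 j)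
          = Finset.Icc 1 (min (i + c) j) := by
        ext a
        simp only [Finset.mem_filter, Finset.mem_Icc, Equiv.Perm.coe_one, id]
        omega
      rw [this]; simp
    rw [this]
    omega
  | succ N ih =>
    intro D hD hpos
    obtain ⟨q, hq, hlast⟩ := exists_last D (Finset.card_pos.mp (by omega))
    have hcard : (D.erase q).card = N := by rw [Finset.card_erase_of_mem hq]; omega
    have ih' := ih (D.erase q) hcard (fun p hp => hpos p (Finset.mem_of_mem_erase hp))
    have hqpos := hpos q hq
    have hw := wordProd_insert_sw (D.erase q) q hqpos (by
      intro p hp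
      have := hlast p (Finset.mem_of_mem_erase hp) (Finset.ne_of_mem_erase hp)
      omega)
    rw [Finset.insert_erase hq] at hw
    have hrk : ∀ k' j, k' ≠ q.1 + q.2 - 1 →
        rnk (wordProd (pdWord D)) k' j = rnk (wordProd (pdWord (D.erase q))) k' j := by
      intro k' j h
      rw [hw, rnk_mul_swap _ (by omega) h]
    have hstep : ∀ k j, rnk (wordProd (pdWord D)) k j ≤ rnk (wordProd (pdWord D)) (k + 1) j ∧
        rnk (wordProd (pdWord D)) (k + 1) j ≤ rnk (wordProd (pdWord D)) k j + 1 := by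
      intro k j
      rw [rnk_succ]
      split_ifs <;> omega
    have hne : ∀ i c j : ℕ, i + c ≠ q.1 + q.2 - 1 → c ≤ j →
        (∀ p ∈ D.erase q, p.1 ≤ i ∨ c < p.2) →
        ∀ C : Finset (ℕ × ℕ), Chn C →
        (∀ x ∈ C, x ∉ D ∧ 1 ≤ x.1 ∧ x.1 ≤ i ∧ c < x.2 ∧ x.2 ≤ j) →
        c + C.card ≤ rnk (wordProd (pdWord D)) (i + c) j := by
      intro i c j hk hcj hr C hC hC2
      rw [hrk _ _ hk]
      apply ih' i c j hcj hr C hC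
      intro x hx
      obtain ⟨h1, h2⟩ := hC2 x hx
      exact ⟨fun h => h1 (Finset.mem_of_mem_erase h), h2⟩
    intro i
    induction i with
    | zero =>
      intro c j hcj hr C hC hC2
      have := hr q hq
      exact hne 0 c j (by omega) hcj (fun p hp => hr p (Finset.mem_of_mem_erase hp)) C hC hC2
    | succ i ihi =>
      intro c j hcj hr C hC hC2
      by_cases hk : i + 1 + c = q.1 + q.2 - 1
      swap
      · exact hne (i + 1) c j hk hcj (fun p hp => hr p (Finset.mem_of_mem_erase hp)) C hC hC2
      have hrq := hr q hq
      have hle : ∀ p ∈ D.erase q, p.1 < q.1 ∨ (p.1 = q.1 ∧ q.2 < p.2) := fun p hp =>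
        hlast p (Finset.mem_of_mem_erase hp) (Finset.ne_of_mem_erase hp)
      by_cases hrow : ∀ x ∈ C, x.1 ≤ i
      · have h1 := hne i c j (by omega) hcj (fun p hp => by have := hle p hp; omega) C hC
          (fun x hx => by
            obtain ⟨g1, g2⟩ := hC2 x hx
            have := hrow x hx
            exact ⟨g1, by omega⟩)
        have h2 := (hstep (i + c) j).1
        rw [show i + 1 + c = i + c + 1 by omega]
        omega
      push Not at hrow
      obtain ⟨x, hx, hxi⟩ := hrow
      have gx := (hC2 x hx).2
      by_cases hcol : ∀ x ∈ C, c + 1 < x.2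
      · have h1 := hne (i + 1) (c + 1) j (by omega) (by omega)
          (fun p hp => by have := hle p hp; omega) C hC
          (fun x hx => by
            obtain ⟨g1, g2⟩ := hC2 x hx
            have := hcol x hx
            exact ⟨g1, by omega⟩)
        have h2 := (hstep (i + 1 + c) j).2
        rw [show i + 1 + (c + 1) = i + 1 + c + 1 by omega] at h1
        omega
      push Not at hcol
      obtain ⟨x', hx', hxc⟩ := hcol
      have gx' := (hC2 x' hx').2
      have exx : x = x' := by
        rcases hC x hx x' hx' with h | h | h
        · exact h
        · omega
        · omega
      subst exx
      have hxq : x ≠ q := fun e => (hC2 x hx).1 (e ▸ hq)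
      have hiq : i + 1 ≠ q.1 := fun e => hxq (Prod.ext (by omega) (by omega))
      have h1 := ihi (c + 1) j (by omega) (by
        intro p hp
        by_cases hpq : p = q
        · subst hpq; omega
        · have := hlast p hp hpq
          omega) (C.erase x) (hC.subset (Finset.erase_subset _ _)) (by
        intro t ht
        have ht' := Finset.mem_of_mem_erase ht
        obtain ⟨g1, g2⟩ := hC2 t ht'
        refine ⟨g1, ?_⟩
        rcases hC x hx t ht' with h | h | h
        · exact absurd h.symm (Finset.ne_of_mem_erase ht)
        · omega
        · omega)
      rw [Finset.card_erase_of_mem hx] at h1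
      have := Finset.card_pos.mpr ⟨x, hx⟩
      rw [show i + (c + 1) = i + 1 + c by omega] at h1
      omega

theorem chain_le_word {D : Finset (ℕ × ℕ)} (hpos : ∀ p ∈ D, 1 ≤ p.1 ∧ 1 ≤ p.2) {i j : ℕ}
    {C : Finset (ℕ × ℕ)} (hC : Chn C)
    (hC2 : ∀ x ∈ C, x ∉ D ∧ 1 ≤ x.1 ∧ x.1 ≤ i ∧ 1 ≤ x.2 ∧ x.2 ≤ j) :
    C.card ≤ rnk (wordProd (pdWord D)) i j := by
  have := chain_le_word_aux D.card D rfl hpos i 0 j (by omega)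
    (fun p hp => by have := hpos p hp; omega) C hC
    (fun x hx => by
      obtain ⟨h1, h2⟩ := hC2 x hx
      exact ⟨h1, by omega⟩)
  simpa using this

/-! ### Boundary paths -/

/-- Chain bounds along the boundary paths `p` (lower) and `q` (upper). -/
def Bd (m : ℕ) (B : ℕ × ℕ → Prop) (p q : ℕ → ℕ) (w : Equiv.Perm ℕ) : Prop :=
  ∀ k l, k ≤ m → l ≤ m → l - q l ≤ p k → k - p k ≤ q l → ∀ C : Finset (ℕ × ℕ), Chn C →
    (∀ x ∈ C, ¬ B x ∧ l - q l < x.1 ∧ x.1 ≤ p k ∧ k - p k < x.2 ∧ x.2 ≤ q l) →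
    (k - p k) + (l - q l) + C.card ≤ rnk w k l

theorem Bd.symm {m : ℕ} {B : ℕ × ℕ → Prop} (hB : ∀ x, B x → B x.swap) {p q : ℕ → ℕ}
    {w : Equiv.Perm ℕ} (h : Bd m B p q w) : Bd m B q p w⁻¹ := by
  intro k l hk hl h1 h2 C hC hC2
  have := h l k hl hk h2 h1 (C.image Prod.swap) hC.swap (by
    intro x hx
    rw [Finset.mem_image] at hx
    obtain ⟨y, hy, rfl⟩ := hx
    obtain ⟨g1, g2, g3, g4, g5⟩ := hC2 y hy
    exact ⟨fun hb => g1 (by simpa using hB _ hb), g4, g5, g2, g3⟩)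
  rw [card_image_swap] at this
  rw [rnk_inv]
  omega

theorem Bd.lower {m : ℕ} {B : ℕ × ℕ → Prop} {p q : ℕ → ℕ} {w w' : Equiv.Perm ℕ}
    (h : Bd m B p q w) {k : ℕ} (hk1 : 1 ≤ k) (hkm : k < m) (hp1 : p (k - 1) + 1 = p k)
    (hp2 : p (k + 1) = p k) (hp3 : p k ≤ k)
    (hr : ∀ k', k' ≠ k → ∀ l, rnk w' k' l = rnk w k' l)
    (hc : (w' k < w' (k + 1) ∧ 1 ≤ w' k) ∨
      (¬ B (p k, k - p k + 1) ∧ ∀ l, rnk w' k l = rnk w k l)) :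
    Bd m B (Function.update p k (p k - 1)) q w' := by
  intro k' l hk' hl h1 h2 C hC hC2
  by_cases hkk : k' = k
  swap
  · rw [Function.update_of_ne hkk] at *
    rw [hr k' hkk]
    exact h k' l hk' hl h1 h2 C hC hC2
  subst hkk
  rw [Function.update_self] at *
  rcases hc with ⟨ha, hpos⟩ | ⟨hb, he⟩
  · have b1 := h (k' - 1) l (by omega) hl (by omega) (by omega) C hC (by
      intro x hx
      obtain ⟨g1, g2⟩ := hC2 x hx
      exact ⟨g1, by omega⟩)
    have b2 := h (k' + 1) l (by omega) hl (by omega) (by omega) C hC (by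
      intro x hx
      obtain ⟨g1, g2⟩ := hC2 x hx
      exact ⟨g1, by omega⟩)
    rw [← hr _ (by omega)] at b1 b2
    have s1 := rnk_succ w' (k' - 1) l
    have s2 := rnk_succ w' k' l
    rw [show k' - 1 + 1 = k' by omega] at s1
    split_ifs at s1 s2 <;> omega
  · rw [he]
    have hn : (p k', k' - p k' + 1) ∉ C := by
      intro hx
      have := hC2 _ hx
      simp only at this
      omega
    have b := h k' l hk' hl (by omega) (by omega) (insert (p k', k' - p k' + 1) C)
      (hC.insert _ (by
        intro x hx
        have := hC2 x hx
        simp only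
        omega)) (by
        intro x hx
        rw [Finset.mem_insert] at hx
        rcases hx with rfl | hx
        · refine ⟨hb, ?_⟩
          simp only
          omega
        · obtain ⟨g1, g2⟩ := hC2 x hx
          exact ⟨g1, by omega⟩)
    rw [Finset.card_insert_of_notMem hn] at b
    omega

/-- Admissible boundary paths. -/
structure IsPth (m : ℕ) (p : ℕ → ℕ) : Prop where
  step : ∀ k, k < m → p k ≤ p (k + 1) ∧ p (k + 1) ≤ p k + 1
  le : ∀ k, k ≤ m → p k ≤ k
  ge : ∀ k, k ≤ m → k ≤ 2 * p k
  top : 2 * p m = m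

theorem IsPth.mono {m : ℕ} {p : ℕ → ℕ} (h : IsPth m p) {a : ℕ} (d : ℕ) (hb : a + d ≤ m) :
    p a ≤ p (a + d) ∧ p (a + d) ≤ p a + d := by
  induction d with
  | zero => simp
  | succ d ih =>
    have h1 := ih (by omega)
    have h2 := h.step (a + d) (by omega)
    rw [show a + (d + 1) = a + d + 1 by omega]
    omega

theorem IsPth.corner {m : ℕ} {p : ℕ → ℕ} (h : IsPth m p) :
    (∀ k, k ≤ m → 2 * p k ≤ k + 1) ∨
    ∃ k, 1 ≤ k ∧ k < m ∧ p (k - 1) + 1 = p k ∧ p (k + 1) = p k ∧ k + 2 ≤ 2 * p k ∧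
      IsPth m (Function.update p k (p k - 1)) := by
  obtain ⟨k, hk, hmax⟩ := Finset.exists_max_image (Finset.range (m + 1))
    (fun k => 2 * p k - k) ⟨0, by simp⟩
  rw [Finset.mem_range] at hk
  have hmax' : ∀ k', k' ≤ m → 2 * p k' - k' ≤ 2 * p k - k := fun k' hk' =>
    hmax k' (by rw [Finset.mem_range]; omega)
  by_cases hv : 2 * p k ≤ k + 1
  · left
    intro k' hk'
    have := hmax' k' hk'
    omega
  · right
    have hk0 := h.le k (by omega)
    have htop := h.top
    have hkm : k < m := by
      rcases Nat.lt_or_ge k m with h | h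
      · exact h
      · have : k = m := by omega
        subst this; omega
    have a1 := hmax' (k - 1) (by omega)
    have a2 := hmax' (k + 1) (by omega)
    have s1 := h.step (k - 1) (by omega)
    have s2 := h.step k hkm
    rw [show k - 1 + 1 = k by omega] at s1
    have c1 : p (k - 1) + 1 = p k := by omega
    have c2 : p (k + 1) = p k := by omega
    refine ⟨k, by omega, hkm, c1, c2, by omega, ?_⟩
    constructor
    · intro t ht
      have := h.step t ht
      by_cases e1 : t = k
      · subst e1
        rw [Function.update_self, Function.update_of_ne (by omega)]
        omega
      · by_cases e2 : t + 1 = k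
        · subst e2
          rw [Function.update_self, Function.update_of_ne (by omega)]
          simp only [Nat.add_sub_cancel] at c1
          omega
        · rw [Function.update_of_ne e1, Function.update_of_ne e2]
          exact this
    · intro t ht
      have := h.le t ht
      by_cases e1 : t = k
      · subst e1; rw [Function.update_self]; omega
      · rw [Function.update_of_ne e1]; exact this
    · intro t ht
      have := h.ge t ht
      by_cases e1 : t = k
      · subst e1; rw [Function.update_self]; omega
      · rw [Function.update_of_ne e1]; exact this
    · rw [Function.update_of_ne (by omega)]; exact htop

theorem perm_inv_of_sq {y : Equiv.Perm ℕ} (hy : y * y = 1) : y⁻¹ = y := by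
  rw [inv_eq_iff_mul_eq_one]; exact hy

theorem perm_sq_apply {y : Equiv.Perm ℕ} (hy : y * y = 1) (i : ℕ) : y (y i) = i := by
  rw [← Equiv.Perm.mul_apply, hy]; rfl

/-- symmetric one-step removal -/
theorem Bd.step {m : ℕ} {B : ℕ × ℕ → Prop} (hB : ∀ x, B x → B x.swap)
    (hd : ∀ x : ℕ × ℕ, x.1 = x.2 → B x) {p : ℕ → ℕ} {y : Equiv.Perm ℕ} (hy : y ∈ IFPFm m)
    (h : Bd m B p p y) {k : ℕ} (hk1 : 1 ≤ k) (hkm : k < m) (hp1 : p (k - 1) + 1 = p k)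
    (hp2 : p (k + 1) = p k) (hp3 : p k ≤ k) :
    Bd m B (Function.update p k (p k - 1)) (Function.update p k (p k - 1)) y ∨
    (B (p k, k - p k + 1) ∧ y (k + 1) < y k ∧ y k ≠ k + 1 ∧
      Bd m B (Function.update p k (p k - 1)) (Function.update p k (p k - 1))
        (Equiv.swap k (k + 1) * y * Equiv.swap k (k + 1))) := by
  obtain ⟨hy0, hy2, hyf, hyt⟩ := hy
  have hyi := perm_inv_of_sq hy2
  have hyy := perm_sq_apply hy2
  have ypos : ∀ i, 1 ≤ i → 1 ≤ y i := by
    intro i hi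
    rcases Nat.eq_zero_or_pos (y i) with h0 | h0
    · have := hyy i
      rw [h0, hy0] at this
      omega
    · exact h0
  by_cases hsame : ¬ B (p k, k - p k + 1) ∨ y k < y (k + 1)
  · left
    have hc : (y k < y (k + 1) ∧ 1 ≤ y k) ∨
      (¬ B (p k, k - p k + 1) ∧ ∀ l, rnk y k l = rnk y k l) := by
      rcases hsame with h | h
      · right; exact ⟨h, fun _ => rfl⟩
      · left; exact ⟨h, ypos k hk1⟩
    have h1 := (h.lower hk1 hkm hp1 hp2 hp3 (fun _ _ _ => rfl) hc).symm hB
    rw [hyi] at h1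
    have h2 := (h1.lower hk1 hkm hp1 hp2 hp3 (fun _ _ _ => rfl) hc).symm hB
    rwa [hyi] at h2
  push Not at hsame
  obtain ⟨hb, hdesc⟩ := hsame
  have hne : y (k + 1) ≠ y k := fun e => by have := y.injective e; omega
  have hlt : y (k + 1) < y k := by omega
  have h1 := (h.lower (w' := y * Equiv.swap k (k + 1)) hk1 hkm hp1 hp2 hp3
    (fun k' hk' l => rnk_mul_swap _ hk1 hk' l) (Or.inl (by
      simp only [Equiv.Perm.mul_apply, Equiv.swap_apply_left, Equiv.swap_apply_right]
      exact ⟨hlt, ypos _ (by omega)⟩))).symm hB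
  rw [mul_inv_rev, hyi, Equiv.swap_inv] at h1
  by_cases he : y k = k + 1
  · left
    have he' : y (k + 1) = k := by rw [← he, hyy]
    have h2 := (h1.lower (w' := Equiv.swap k (k + 1) * y) hk1 hkm hp1 hp2 hp3
      (fun k' hk' l => rfl) (Or.inl (by
        simp only [Equiv.Perm.mul_apply, he, he', Equiv.swap_apply_left, Equiv.swap_apply_right]
        omega))).symm hB
    rw [mul_inv_rev, hyi, Equiv.swap_inv] at h2
    intro k' l hk' hl g1 g2 C hC hC2
    have b := h2 k' l hk' hl g1 g2 C hC hC2
    by_cases hkk : k' = k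
    swap
    · rwa [rnk_mul_swap _ hk1 hkk] at b
    subst hkk
    have r1 : rnk (y * Equiv.swap k' (k' + 1)) (k' - 1) l = rnk y (k' - 1) l :=
      rnk_mul_swap _ hk1 (by omega) l
    have s1 := rnk_succ (y * Equiv.swap k' (k' + 1)) (k' - 1) l
    have s2 := rnk_succ y (k' - 1) l
    rw [show k' - 1 + 1 = k' by omega] at s1 s2
    simp only [Equiv.Perm.mul_apply, Equiv.swap_apply_left, he, he'] at s1 s2
    by_cases hlk : l = k'
    swap
    · split_ifs at s1 s2 <;> omega
    subst hlk
    rw [if_pos (by omega)] at s1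
    rw [if_neg (by omega)] at s2
    obtain ⟨t, ht⟩ := rnk_even (k := l) hy2 (fun i h1 h2 => hyf i h1 (by omega))
    rcases Nat.even_or_odd C.card with ⟨e, hev⟩ | hod
    · omega
    · obtain ⟨C', c1, c2, c3⟩ := hC.grow hB hd
        (lo := l - Function.update p l (p l - 1) l) (hi := Function.update p l (p l - 1) l)
        hC2 hod
      have b' := h2 l l hk' hl g1 g2 C' c1 c2
      omega
  · right
    refine ⟨hb, hlt, he, ?_⟩
    have h2 := (h1.lower (w' := Equiv.swap k (k + 1) * y * Equiv.swap k (k + 1)) hk1 hkm hp1 hp2 hp3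
      (fun k' hk' l => rnk_mul_swap _ hk1 hk' l) (Or.inl (by
        simp only [Equiv.Perm.mul_apply, Equiv.swap_apply_left, Equiv.swap_apply_right]
        have := ypos (k + 1) (by omega)
        simp only [Equiv.swap_apply_def]
        split_ifs <;> omega))).symm hB
    simpa [mul_inv_rev, hyi, mul_assoc] using h2

/-- The diagonal boxes. -/
def dg (h : ℕ) : Finset (ℕ × ℕ) := (Finset.Icc 1 h).image fun t => (t, t)

theorem mem_dg {h : ℕ} {x : ℕ × ℕ} : x ∈ dg h ↔ 1 ≤ x.1 ∧ x.1 ≤ h ∧ x.1 = x.2 := by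
  unfold dg
  rw [Finset.mem_image]
  constructor
  · rintro ⟨t, ht, rfl⟩
    rw [Finset.mem_Icc] at ht
    exact ⟨ht.1, ht.2, rfl⟩
  · rintro ⟨h1, h2, h3⟩
    exact ⟨x.1, Finset.mem_Icc.mpr ⟨h1, h2⟩, Prod.ext rfl h3⟩

/-- Symmetrization of a set of lower boxes. -/
def symz (h : ℕ) (E : Finset (ℕ × ℕ)) : Finset (ℕ × ℕ) := E ∪ E.image Prod.swap ∪ dg h

theorem mem_symz {h : ℕ} {E : Finset (ℕ × ℕ)} {x : ℕ × ℕ} :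
    x ∈ symz h E ↔ x ∈ E ∨ x.swap ∈ E ∨ (1 ≤ x.1 ∧ x.1 ≤ h ∧ x.1 = x.2) := by
  unfold symz
  rw [Finset.mem_union, Finset.mem_union, mem_dg, Finset.mem_image, or_assoc]
  have : (∃ a ∈ E, a.swap = x) ↔ x.swap ∈ E := by
    constructor
    · rintro ⟨a, ha, rfl⟩; simpa using ha
    · intro hx; exact ⟨_, hx, by simp⟩
  rw [this]

theorem dg_word (h : ℕ) : (∀ i, wordProd (pdWord (dg h)) i =
      if 1 ≤ i ∧ i ≤ 2 * h then oneFPF i else i) ∧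
    (dg h).card ≤ (InvS (wordProd (pdWord (dg h)))).ncard := by
  induction h with
  | zero =>
    have : dg 0 = ∅ := by ext x; rw [mem_dg]; simp; omega
    rw [this]
    constructor
    · intro i
      rw [if_neg (by omega)]
      simp [pdWord, wordProd_nil]
    · simp
  | succ h ih =>
    have e : dg (h + 1) = insert (h + 1, h + 1) (dg h) := by
      ext x
      rw [Finset.mem_insert, mem_dg, mem_dg, Prod.ext_iff]
      simp only
      omega
    have hn : (h + 1, h + 1) ∉ dg h := by rw [mem_dg]; simp
    have hw := wordProd_insert_sw (dg h) (h + 1, h + 1) (by simp) (by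
      intro p hp
      rw [mem_dg] at hp
      simp only
      omega)
    simp only at hw
    rw [show h + 1 + (h + 1) - 1 = 2 * h + 1 by omega] at hw
    rw [e, hw]
    constructor
    · intro i
      rw [Equiv.Perm.mul_apply, ih.1]
      simp only [Equiv.swap_apply_def, oneFPF]
      split_ifs <;> omega
    · rw [Finset.card_insert_of_notMem hn]
      have := InvS_asc (w := wordProd (pdWord (dg h))) (k := 2 * h + 1) (InvS_word _).1 (by
        rw [ih.1, ih.1, if_neg (by omega), if_neg (by omega)]; omega)
      have := ih.2
      omega

theorem main_induction (h : ℕ) (B : ℕ × ℕ → Prop) (hB : ∀ x, B x → B x.swap)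
    (hd : ∀ x : ℕ × ℕ, x.1 = x.2 → B x) (N : ℕ) :
    ∀ (p : ℕ → ℕ) (y : Equiv.Perm ℕ), ∑ k ∈ Finset.range (2 * h + 1), p k = N →
    IsPth (2 * h) p → y ∈ IFPFm (2 * h) → Bd (2 * h) B p p y →
    ∃ E : Finset (ℕ × ℕ), (∀ x ∈ E, B x ∧ 1 ≤ x.2 ∧ x.2 < x.1 ∧ x.1 + x.2 ≤ 2 * h ∧
        x.1 ≤ p (x.1 + x.2 - 1)) ∧
      wordProd (pdWord (symz h E)) = y ∧ (symz h E).card ≤ (InvS y).ncard := by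
  induction N using Nat.strong_induction_on with
  | _ N ih =>
  intro p y hN hp hy hbd
  rcases hp.corner with hbase | ⟨k, hk1, hkm, hp1, hp2, hgt, hp'⟩
  · refine ⟨∅, by simp, ?_⟩
    have es : symz h ∅ = dg h := by simp [symz]
    rw [es]
    have key : wordProd (pdWord (dg h)) = y := by
      obtain ⟨hy0, hy2, hyf, hyt⟩ := hy
      have hyy := perm_sq_apply hy2
      have hfull : ∀ t, t ≤ h → ∀ a, 1 ≤ a → a ≤ 2 * t → 1 ≤ y a ∧ y a ≤ 2 * t := by
        intro t ht a ha1 ha2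
        have hpt : p (2 * t) = t := by
          have := hbase (2 * t) (by omega)
          have := hp.ge (2 * t) (by omega)
          omega
        have b := hbd (2 * t) (2 * t) (by omega) (by omega) (by omega) (by omega) ∅
          (by intro x hx; simp at hx) (by simp)
        rw [hpt] at b
        have b' : (Finset.Icc 1 (2 * t)).card ≤
            ((Finset.Icc 1 (2 * t)).filter fun a => y a ∈ Finset.Icc 1 (2 * t)).card := by
          rw [Nat.card_Icc]
          unfold rnk at b
          simp only [Finset.card_empty] at b
          omega
        have e := Finset.eq_of_subset_of_card_le (Finset.filter_subset _ _) b'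
        have : a ∈ (Finset.Icc 1 (2 * t)).filter fun a => y a ∈ Finset.Icc 1 (2 * t) := by
          rw [e, Finset.mem_Icc]; omega
        rw [Finset.mem_filter, Finset.mem_Icc, Finset.mem_Icc] at this
        exact this.2
      have heven : ∀ t, 1 ≤ t → t ≤ h → y (2 * t) = 2 * t - 1 := by
        intro t ht1 ht2
        have a1 := hfull t ht2 (2 * t) (by omega) le_rfl
        have a2 := hyf (2 * t) (by omega) (by omega)
        rcases Nat.lt_or_ge (2 * (t - 1)) (y (2 * t)) with a3 | a3
        · omega
        · have a4 := hfull (t - 1) (by omega) (y (2 * t)) a1.1 a3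
          rw [hyy] at a4
          omega
      ext i
      rw [(dg_word h).1]
      split_ifs with hi
      · unfold oneFPF
        split_ifs with hi2
        · have := heven ((i + 1) / 2) (by omega) (by omega)
          rw [show 2 * ((i + 1) / 2) = i + 1 by omega] at this
          rw [← hyy (i + 1), this]
          simp
        · have := heven (i / 2) (by omega) (by omega)
          rw [show 2 * (i / 2) = i by omega] at this
          exact this.symm
      · rcases Nat.eq_zero_or_pos i with rfl | h0
        · exact hy0.symm
        · exact (hyt i (by omega)).symm
    refine ⟨key, ?_⟩
    rw [← key]
    exact (dg_word h).2
  · have hple := hp.le k (by omega)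
    have hsum : ∑ t ∈ Finset.range (2 * h + 1), Function.update p k (p k - 1) t < N := by
      rw [← hN]
      apply Finset.sum_lt_sum
      · intro t _
        by_cases e : t = k
        · subst e; rw [Function.update_self]; omega
        · rw [Function.update_of_ne e]
      · exact ⟨k, Finset.mem_range.mpr (by omega), by rw [Function.update_self]; omega⟩
    have hupd : ∀ t, Function.update p k (p k - 1) t ≤ p t := by
      intro t
      by_cases e : t = k
      · subst e; rw [Function.update_self]; omega
      · rw [Function.update_of_ne e]
    rcases hbd.step hB hd hy hk1 hkm hp1 hp2 hple with hcase | ⟨hb, hlt, hne, hcase⟩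
    · obtain ⟨E, hE, hE2⟩ := ih _ hsum _ y rfl hp' hy hcase
      refine ⟨E, ?_, hE2⟩
      intro x hx
      obtain ⟨g1, g2, g3, g4, g5⟩ := hE x hx
      exact ⟨g1, g2, g3, g4, g5.trans (hupd _)⟩
    · obtain ⟨hy0, hy2, hyf, hyt⟩ := hy
      have hyy := perm_sq_apply hy2
      set s := Equiv.swap k (k + 1) with hs
      have hss : s * s = 1 := Equiv.swap_mul_self _ _
      have hy' : s * y * s ∈ IFPFm (2 * h) := by
        refine ⟨?_, ?_, ?_, ?_⟩
        · simp only [Equiv.Perm.mul_apply]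
          have : s 0 = 0 := Equiv.swap_apply_of_ne_of_ne (by omega) (by omega)
          rw [this, hy0, this]
        · calc s * y * s * (s * y * s) = s * y * (s * s) * y * s := by simp only [mul_assoc]
            _ = s * (y * y) * s := by rw [hss]; simp only [mul_assoc, one_mul]
            _ = 1 := by rw [hy2, mul_one, hss]
        · intro i hi1 hi2 e
          simp only [Equiv.Perm.mul_apply] at e
          have e2 : y (s i) = s i := by
            rw [← Equiv.swap_apply_self k (k + 1) (y (s i)), ← hs, e]
          refine hyf (s i) ?_ ?_ e2 <;>
          · rw [hs, Equiv.swap_apply_def]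
            split_ifs <;> omega
        · intro i hi
          simp only [Equiv.Perm.mul_apply]
          have : s i = i := Equiv.swap_apply_of_ne_of_ne (by omega) (by omega)
          rw [this, hyt i hi, this]
      obtain ⟨E, hE, hE2, hE3⟩ := ih _ hsum _ (s * y * s) rfl hp' hy' hcase
      have hq1 : 1 ≤ k - p k + 1 := by omega
      set q : ℕ × ℕ := (p k, k - p k + 1) with hq
      have hqk : q.1 + q.2 - 1 = k := by rw [hq]; simp only; omega
      -- extremality
      have hext : ∀ x ∈ E, x.1 < q.1 ∨ q.2 < x.2 := by
        intro x hx
        obtain ⟨g1, g2, g3, g4, g5⟩ := hE x hx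
        rw [hq]
        simp only
        by_contra hcon
        push Not at hcon
        rcases Nat.le_total (x.1 + x.2 - 1) k with hle | hle
        · have := (hp'.mono (a := x.1 + x.2 - 1) (k - (x.1 + x.2 - 1)) (by omega)).1
          rw [show x.1 + x.2 - 1 + (k - (x.1 + x.2 - 1)) = k by omega, Function.update_self] at this
          omega
        · have := (hp'.mono (a := k) (x.1 + x.2 - 1 - k) (by omega)).2
          rw [show k + (x.1 + x.2 - 1 - k) = x.1 + x.2 - 1 by omega, Function.update_self] at this
          omega
      have hqE : q ∉ E := fun hx => by have := hext q hx; omega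
      have q1 : q.2 < q.1 := by rw [hq]; simp only; omega
      have q2 : 1 ≤ q.2 := hq1
      have hpos : ∀ x ∈ symz h E, 1 ≤ x.1 ∧ 1 ≤ x.2 := by
        intro x hx
        rw [mem_symz] at hx
        rcases hx with hx | hx | hx
        · have := hE x hx; omega
        · have := hE _ hx
          simp only [Prod.fst_swap, Prod.snd_swap] at this
          omega
        · omega
      have hins : symz h (insert q E) = insert q (insert q.swap (symz h E)) := by
        ext x
        simp only [Finset.mem_insert, mem_symz]
        have : x.swap = q ↔ x = q.swap := by
          constructor
          · intro e; rw [← e]; simp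
          · intro e; rw [e]; simp
        rw [this]
        tauto
      have w1 := wordProd_insert_ne (symz h E) q.swap ⟨by simpa using q2, by simp; omega⟩ hpos (by
        intro x hx
        rw [mem_symz] at hx
        simp only [Prod.fst_swap, Prod.snd_swap]
        rcases hx with hx | hx | hx
        · have := hE x hx; omega
        · have := hext _ hx
          simp only [Prod.fst_swap, Prod.snd_swap] at this
          omega
        · omega)
      have hsw : ∀ x ∈ insert q.swap (symz h E), x.1 < q.1 ∨ q.2 < x.2 := by
        intro x hx
        rw [Finset.mem_insert, mem_symz] at hx
        rcases hx with rfl | hx | hx | hx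
        · simp only [Prod.fst_swap, Prod.snd_swap]; omega
        · exact hext x hx
        · have := hE _ hx
          simp only [Prod.fst_swap, Prod.snd_swap] at this
          omega
        · omega
      have w2 := wordProd_insert_sw (insert q.swap (symz h E)) q ⟨by omega, q2⟩ hsw
      have n1 : q ∉ insert q.swap (symz h E) := fun hx => by have := hsw q hx; omega
      have n2 : q.swap ∉ symz h E := by
        rw [mem_symz]
        simp only [Prod.swap_swap, Prod.fst_swap, Prod.snd_swap]
        rintro (hx | hx | hx)
        · have := hE _ hx
          simp only [Prod.fst_swap, Prod.snd_swap] at this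
          omega
        · exact hqE hx
        · omega
      simp only [Prod.fst_swap, Prod.snd_swap] at w1
      rw [show q.2 + q.1 - 1 = k by omega, hE2] at w1
      rw [hqk, w1] at w2
      have hconj : s * (s * y * s) * s = y := by
        calc s * (s * y * s) * s = (s * s) * y * (s * s) := by simp only [mul_assoc]
          _ = y := by rw [hss, one_mul, mul_one]
      refine ⟨insert q E, ?_, ?_, ?_⟩
      · intro x hx
        rw [Finset.mem_insert] at hx
        rcases hx with rfl | hx
        · refine ⟨hb, q2, q1, by omega, ?_⟩
          rw [hqk]
        · obtain ⟨g1, g2, g3, g4, g5⟩ := hE x hx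
          exact ⟨g1, g2, g3, g4, g5.trans (hupd _)⟩
      · rw [hins, w2, ← hs, hconj]
      · rw [hins, Finset.card_insert_of_notMem n1, Finset.card_insert_of_notMem n2]
        have hfin : (InvS (s * y * s)).Finite := by rw [← hE2]; exact (InvS_word _).1
        have c1 : (s * y * s) k < (s * y * s) (k + 1) := by
          simp only [Equiv.Perm.mul_apply, hs, Equiv.swap_apply_left, Equiv.swap_apply_right]
          simp only [Equiv.swap_apply_def]
          split_ifs <;> omega
        have c2 : (s * y * s) k ≠ k := hy'.2.2.1 k hk1 (by omega)
        have := InvS_conj hy'.2.1 hfin c1 c2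
        rw [← hs, hconj] at this
        omega

theorem pos_of_perm {z : Equiv.Perm ℕ} (hz0 : z 0 = 0) {a : ℕ} (ha : 1 ≤ a) : 1 ≤ z a := by
  rcases Nat.eq_zero_or_pos (z a) with h | h
  · have : z a = z 0 := by rw [h, hz0]
    have := z.injective this
    omega
  · exact h

theorem rnk_full {z : Equiv.Perm ℕ} (hz0 : z 0 = 0) {k l : ℕ}
    (h : ∀ a, 1 ≤ a → a ≤ l → z a ≤ k) : l ≤ rnk z l k := by
  unfold rnk
  rw [Finset.filter_true_of_mem, Nat.card_Icc]
  · omega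
  · intro a ha
    rw [Finset.mem_Icc] at ha
    rw [Finset.mem_Icc]
    exact ⟨pos_of_perm hz0 ha.1, h a ha.1 ha.2⟩

theorem rnk_symm {z : Equiv.Perm ℕ} (h2 : z * z = 1) (k l : ℕ) : rnk z k l = rnk z l k := by
  have := rnk_inv z k l
  rw [perm_inv_of_sq h2] at this
  exact this.symm

theorem rnk_tail {z : Equiv.Perm ℕ} {m : ℕ} (hm : Even m) (hz0 : z 0 = 0) (h2 : z * z = 1)
    (hp : ∀ i, i ≤ m → z i ≤ m) (ht : ∀ i, m < i → z i = oneFPF i) {k l : ℕ}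
    (hlk : l ≤ k) (hmk : m < k) : l ≤ rnk z k l ∨ (k = l ∧ Odd k ∧ l ≤ rnk z k l + 1) := by
  rw [rnk_symm h2]
  have hle : ∀ a, z a ≤ m ∨ z a ≤ a + 1 := by
    intro a
    rcases le_or_gt a m with h | h
    · left; exact hp a h
    · right; rw [ht a h]; unfold oneFPF; split_ifs <;> omega
  by_cases h : k = l ∧ Odd k
  · right
    refine ⟨h.1, h.2, ?_⟩
    obtain ⟨rfl, -⟩ := h
    obtain ⟨k, rfl⟩ : ∃ k', k = k' + 1 := ⟨k - 1, by omega⟩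
    rw [rnk_succ]
    have := rnk_full hz0 (k := k + 1) (l := k) (by
      intro a h1 h3
      rcases hle a with h | h <;> omega)
    omega
  · left
    apply rnk_full hz0
    intro a h1 h3
    rcases hle a with h4 | h4
    · omega
    · rcases Nat.lt_or_ge a k with h5 | h5
      · omega
      · have e1 : a = k := by omega
        have e2 : k = l := by omega
        have : ¬ Odd k := fun h6 => h ⟨e2, h6⟩
        rw [Nat.odd_iff] at this
        rw [ht a (by omega)]
        unfold oneFPF
        split_ifs <;> omega

theorem Chn.odd_square {C : Finset (ℕ × ℕ)} (h : Chn C) {B : ℕ × ℕ → Prop}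
    (hB : ∀ x, B x → B x.swap) (hd : ∀ x : ℕ × ℕ, x.1 = x.2 → B x) {lo hi : ℕ}
    (hc : ∀ x ∈ C, ¬ B x ∧ lo < x.1 ∧ x.1 ≤ hi ∧ lo < x.2 ∧ x.2 ≤ hi) (hodd : Odd (hi - lo)) :
    C.card + 1 ≤ hi - lo := by
  have h1 := h.card_le_cols (a := lo) (b := hi) (fun x hx => (hc x hx).2.2.2)
  by_contra h2
  have e : C.card = hi - lo := by omega
  obtain ⟨C', c1, c2, c3⟩ := h.grow hB hd hc (by rw [e]; exact hodd)
  have h3 := c1.card_le_cols (a := lo) (b := hi) (fun x hx => (c2 x hx).2.2.2)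
  omega

theorem chain_ext_row {C : Finset (ℕ × ℕ)} (h : Chn C) {k : ℕ} (hk : ∀ x ∈ C, x.1 ≤ k + 1) :
    C.card ≤ (C.filter fun x => x.1 ≤ k).card + 1 := by
  have h1 : (C.filter fun x => ¬ x.1 ≤ k).card ≤ k + 1 - k := by
    apply (h.subset (Finset.filter_subset _ _)).card_le_rows
    intro x hx
    rw [Finset.mem_filter] at hx
    have := hk x hx.1
    omega
  have := Finset.card_filter_add_card_filter_not (s := C) (fun x => x.1 ≤ k)
  omega

theorem chain_ext_col {C : Finset (ℕ × ℕ)} (h : Chn C) {k : ℕ} (hk : ∀ x ∈ C, x.2 ≤ k + 1) :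
    C.card ≤ (C.filter fun x => x.2 ≤ k).card + 1 := by
  have h1 : (C.filter fun x => ¬ x.2 ≤ k).card ≤ k + 1 - k := by
    apply (h.subset (Finset.filter_subset _ _)).card_le_cols
    intro x hx
    rw [Finset.mem_filter] at hx
    have := hk x hx.1
    omega
  have := Finset.card_filter_add_card_filter_not (s := C) (fun x => x.2 ≤ k)
  omega

theorem chain_ext {n : ℕ} {z : Equiv.Perm ℕ} (hz : z ∈ FPFIn n) {B : ℕ × ℕ → Prop}
    (hB : ∀ x, B x → B x.swap) (hd : ∀ x : ℕ × ℕ, x.1 = x.2 → B x)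
    (H : ∀ i j, 1 ≤ j → j ≤ i → i ≤ n → ∀ C : Finset (ℕ × ℕ), Chn C →
      (∀ x ∈ C, ¬ B x ∧ 0 < x.1 ∧ x.1 ≤ i ∧ 0 < x.2 ∧ x.2 ≤ j) → C.card ≤ rnk z i j)
    (s : ℕ) : ∀ k l, k + l = s → ∀ C : Finset (ℕ × ℕ), Chn C →
      (∀ x ∈ C, ¬ B x ∧ 0 < x.1 ∧ x.1 ≤ k ∧ 0 < x.2 ∧ x.2 ≤ l) → C.card ≤ rnk z k l := by
  obtain ⟨⟨hz0, hzf, h2, -⟩, hD⟩ := hz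
  have hzz := perm_sq_apply h2
  induction s using Nat.strong_induction_on with
  | _ s ih =>
  have main : ∀ k l, k + l = s → l ≤ k → ∀ C : Finset (ℕ × ℕ), Chn C →
      (∀ x ∈ C, ¬ B x ∧ 0 < x.1 ∧ x.1 ≤ k ∧ 0 < x.2 ∧ x.2 ≤ l) → C.card ≤ rnk z k l := by
    intro k l hs hlk C hC hC2
    have hcols := hC.card_le_cols (a := 0) (b := l) (fun x hx => (hC2 x hx).2.2.2)
    rcases Nat.eq_zero_or_pos l with hl | hl
    · omega
    rcases Nat.lt_or_ge n k with hk | hk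
    swap
    · exact H k l hl hlk hk C hC hC2
    obtain ⟨k, rfl⟩ : ∃ k', k = k' + 1 := ⟨k - 1, by omega⟩
    obtain ⟨l, rfl⟩ : ∃ l', l = l' + 1 := ⟨l - 1, by omega⟩
    have pk := pos_of_perm hz0 (a := k + 1) (by omega)
    have pl := pos_of_perm hz0 (a := l + 1) (by omega)
    by_cases c1 : z (k + 1) ≤ l + 1
    · rw [rnk_succ, if_pos ⟨pk, c1⟩]
      have := ih (k + (l + 1)) (by omega) k (l + 1) rfl _
        (hC.subset (Finset.filter_subset (fun x => x.1 ≤ k) _)) (by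
          intro x hx
          rw [Finset.mem_filter] at hx
          have := hC2 x hx.1
          exact ⟨this.1, this.2.1, hx.2, this.2.2.2⟩)
      have := chain_ext_row hC (k := k) (fun x hx => (hC2 x hx).2.2.1)
      omega
    by_cases c2 : z (l + 1) ≤ k + 1
    · rw [rnk_symm h2, rnk_succ, if_pos ⟨pl, c2⟩, rnk_symm h2]
      have := ih ((k + 1) + l) (by omega) (k + 1) l rfl _
        (hC.subset (Finset.filter_subset (fun x => x.2 ≤ l) _)) (by
          intro x hx
          rw [Finset.mem_filter] at hx
          have := hC2 x hx.1
          exact ⟨this.1, this.2.1, this.2.2.1, this.2.2.2.1, hx.2⟩)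
      have := chain_ext_col hC (k := l) (fun x hx => (hC2 x hx).2.2.2.2)
      omega
    rcases Nat.lt_or_ge l k with c3 | c3
    · have : (k + 1, l + 1) ∈ Dss z := by
        refine ⟨?_, ?_, ?_, ?_⟩ <;> simp only <;> omega
      have := (hD this).1.2
      simp only at this
      omega
    · have e : l = k := by omega
      subst e
      have f1 := rnk_full hz0 (k := l + 1) (l := l) (by
        intro a a1 a2
        by_contra a3
        have : (l + 1, a) ∈ Dss z := by
          refine ⟨?_, ?_, ?_, ?_⟩ <;> simp only <;> omega
        have := (hD this).1.2
        simp only at this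
        omega)
      have f2 := rnk_succ z l (l + 1)
      have f3 := rnk_even (k := l + 1) h2 (fun i h1 _ => hzf i h1)
      rcases Nat.even_or_odd (l + 1) with g | g
      · rw [Nat.even_iff] at f3 g
        omega
      · have := hC.odd_square hB hd (lo := 0) (hi := l + 1) hC2 (by simpa using g)
        omega
  intro k l hs C hC hC2
  rcases le_total l k with h | h
  · exact main k l hs h C hC hC2
  · rw [rnk_symm h2, ← card_image_swap]
    apply main l k (by omega) h _ hC.swap
    intro x hx
    rw [Finset.mem_image] at hx
    obtain ⟨x, hx, rfl⟩ := hx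
    have := hC2 x hx
    refine ⟨fun hb => this.1 (by simpa using hB _ hb), ?_⟩
    simp only [Prod.fst_swap, Prod.snd_swap]
    omega

theorem init_Bd {h : ℕ} (hh : Even h) {z y : Equiv.Perm ℕ} (hz0 : z 0 = 0) (h2 : z * z = 1)
    (hp : ∀ i, i ≤ h → z i ≤ h) (ht : ∀ i, h < i → z i = oneFPF i)
    {B : ℕ × ℕ → Prop} (hB : ∀ x, B x → B x.swap) (hd : ∀ x : ℕ × ℕ, x.1 = x.2 → B x)
    (H : ∀ k l, ∀ C : Finset (ℕ × ℕ), Chn C →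
      (∀ x ∈ C, ¬ B x ∧ 0 < x.1 ∧ x.1 ≤ k ∧ 0 < x.2 ∧ x.2 ≤ l) → C.card ≤ rnk z k l)
    (hy : ∀ a, a ≤ 2 * h → y a = z a) :
    Bd (2 * h) B (fun k => min k h) (fun k => min k h) y := by
  intro k l hk hl h3 h4 C hC hC2
  rw [rnk_congr (w := y) (w' := z) l (fun a _ ha => hy a (by omega))]
  simp only at h3 h4 hC2 ⊢
  have r := hC.card_le_rows (a := l - min l h) (b := min k h)
    (fun x hx => ⟨(hC2 x hx).2.1, (hC2 x hx).2.2.1⟩)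
  have c := hC.card_le_cols (a := k - min k h) (b := min l h) (fun x hx => (hC2 x hx).2.2.2)
  by_cases hkl : k ≤ h ∧ l ≤ h
  · have := H k l C hC (by
      intro x hx
      have := hC2 x hx
      refine ⟨this.1, ?_⟩
      omega)
    omega
  rcases le_total l k with hlk | hlk
  · rcases rnk_tail hh hz0 h2 hp ht hlk (by omega) with t | ⟨rfl, t1, t2⟩
    · omega
    · have := hC.odd_square hB hd (lo := k - min k h) (hi := min k h) hC2 (by
        rw [Nat.odd_iff] at t1 ⊢
        omega)
      omega
  · rw [rnk_symm h2]
    rcases rnk_tail hh hz0 h2 hp ht hlk (by omega) with t | ⟨rfl, t1, t2⟩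
    · omega
    · have := hC.odd_square hB hd (lo := l - min l h) (hi := min l h) hC2 (by
        rw [Nat.odd_iff] at t1 ⊢
        omega)
      omega

theorem tailSwap_le {m i : ℕ} (h : i ≤ m) : tailSwap m i = i := by
  change tailSwapFun m i = i
  unfold tailSwapFun
  rw [if_pos h]

theorem tailSwap_gt {m i : ℕ} (hm : Even m) (h : m < i) : tailSwap m i = oneFPF i := by
  change tailSwapFun m i = oneFPF i
  rw [Nat.even_iff] at hm
  unfold tailSwapFun oneFPF
  split_ifs <;> omega

theorem oneFPF_gt {m i : ℕ} (hm : Even m) (h : m < i) :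
    m < oneFPF i ∧ oneFPF (oneFPF i) = i ∧ oneFPF i ≠ i := by
  rw [Nat.even_iff] at hm
  unfold oneFPF
  split_ifs <;> omega

theorem forward {n : ℕ} {z : Equiv.Perm ℕ} (hz : z ∈ FPFIn n) (F : Set (ℕ × ℕ))
    (H : ∀ i j, 1 ≤ j → j ≤ i → i ≤ n → ∀ C : Finset (ℕ × ℕ), Chn C →
      (∀ x ∈ C, ¬ (x.1 = x.2 ∨ x ∈ F ∨ x.swap ∈ F) ∧
        0 < x.1 ∧ x.1 ≤ i ∧ 0 < x.2 ∧ x.2 ≤ j) → C.card ≤ rnk z i j)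
    (hF : ∀ x ∈ F, x.2 < x.1) : ∃ E ∈ FP z, ∀ x ∈ E, x ∈ F := by
  have hB : ∀ x : ℕ × ℕ, (x.1 = x.2 ∨ x ∈ F ∨ x.swap ∈ F) →
      (x.swap.1 = x.swap.2 ∨ x.swap ∈ F ∨ x.swap.swap ∈ F) := by
    intro x hx
    simp only [Prod.fst_swap, Prod.snd_swap, Prod.swap_swap]
    tauto
  have hd : ∀ x : ℕ × ℕ, x.1 = x.2 → (x.1 = x.2 ∨ x ∈ F ∨ x.swap ∈ F) := fun x hx => Or.inl hx
  have H2 := fun k l => chain_ext (B := fun x => x.1 = x.2 ∨ x ∈ F ∨ x.swap ∈ F)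
    hz hB hd H (k + l) k l rfl
  obtain ⟨⟨hz0, hzf, h2, N, hN⟩, hD⟩ := hz
  have hzz := perm_sq_apply h2
  obtain ⟨h, hh, hNh⟩ : ∃ h, Even h ∧ N ≤ h := ⟨2 * N, even_two_mul N, by omega⟩
  have pres : ∀ m, Even m → N ≤ m → ∀ i, i ≤ m → z i ≤ m := by
    intro m hm hNm i hi
    by_contra hc
    have e := hzz i
    rw [hN (z i) (by omega)] at e
    have := (oneFPF_gt hm (i := z i) (by omega)).1
    omega
  have hm2 : Even (2 * h) := even_two_mul h
  have p2 := pres (2 * h) hm2 (by omega)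
  set y := z * tailSwap (2 * h) with hydef
  have y1 : ∀ i, i ≤ 2 * h → y i = z i := by
    intro i hi
    rw [hydef, Equiv.Perm.mul_apply, tailSwap_le hi]
  have y2 : ∀ i, 2 * h < i → y i = i := by
    intro i hi
    have o := oneFPF_gt hm2 hi
    rw [hydef, Equiv.Perm.mul_apply, tailSwap_gt hm2 hi, hN _ (by omega), o.2.1]
  have hy : y ∈ IFPFm (2 * h) := by
    refine ⟨by rw [y1 0 (by omega), hz0], ?_, ?_, y2⟩
    · ext i
      rw [Equiv.Perm.mul_apply]
      rcases Nat.lt_or_ge (2 * h) i with hi | hi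
      · rw [y2 i hi, y2 i hi]; rfl
      · rw [y1 i hi, y1 _ (p2 i hi), hzz]; rfl
    · intro i h1 h3
      rw [y1 i h3]
      exact hzf i h1
  have hst : IsFPFStdOf (2 * h) y z := by
    refine ⟨fun i hi => (y1 i hi).symm, fun k => ?_⟩
    rw [hN _ (by omega), hN _ (by omega)]
    unfold oneFPF
    constructor <;> split_ifs <;> omega
  have hbd := init_Bd hh hz0 h2 (pres h hh hNh) (fun i hi => hN i (by omega)) hB hd
    (B := fun x => x.1 = x.2 ∨ x ∈ F ∨ x.swap ∈ F) H2 y1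
  have hpth : IsPth (2 * h) (fun k => min k h) := by
    constructor <;> intros <;> omega
  obtain ⟨E, hE, hw, hc⟩ := main_induction h _ hB hd _ _ y rfl hpth hy hbd
  refine ⟨E, ⟨2 * h, y, symz h E, hm2, hy, hst, ?_, ?_, ?_⟩, ?_⟩
  · have hpos : ∀ p ∈ symz h E, 1 ≤ p.1 ∧ 1 ≤ p.2 := by
      intro p hp
      rw [mem_symz] at hp
      rcases hp with hp | hp | hp
      · have := hE p hp; omega
      · have := hE _ hp
        simp only [Prod.fst_swap, Prod.snd_swap] at this
        omega
      · omega
    refine ⟨hpos, ?_, hw, ?_⟩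
    · intro a ha
      unfold pdWord at ha
      rw [List.mem_map] at ha
      obtain ⟨p, hp, rfl⟩ := ha
      rw [Finset.mem_sort] at hp
      have := hpos p hp
      omega
    · intro l' _ hl'
      have := (InvS_word l').2
      rw [hl'] at this
      rw [length_pdWord]
      omega
  · ext x
    rw [Finset.mem_image]
    constructor
    · rintro ⟨x, hx, rfl⟩
      rw [mem_symz] at hx ⊢
      simp only [Prod.fst_swap, Prod.snd_swap, Prod.swap_swap]
      rcases hx with hx | hx | hx
      · right; left; exact hx
      · left; exact hx
      · right; right; omega
    · intro hx
      refine ⟨x.swap, ?_, by simp⟩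
      rw [mem_symz] at hx ⊢
      simp only [Prod.fst_swap, Prod.snd_swap, Prod.swap_swap]
      rcases hx with hx | hx | hx
      · right; left; exact hx
      · left; exact hx
      · right; right; omega
  · ext x
    rw [Finset.mem_filter, mem_symz]
    constructor
    · intro hx
      exact ⟨Or.inl hx, (hE x hx).2.2.1⟩
    · rintro ⟨hx | hx | hx, hlt⟩
      · exact hx
      · have := hE _ hx
        simp only [Prod.fst_swap, Prod.snd_swap] at this
        omega
      · omega
  · intro x hx
    have := hE x hx
    rcases this.1 with c | c | c
    · omega
    · exact c
    · have := hF _ c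
      simp only [Prod.fst_swap, Prod.snd_swap] at this
      omega

theorem backward {z : Equiv.Perm ℕ} (hz0 : z 0 = 0) (h2 : z * z = 1) {E : Finset (ℕ × ℕ)}
    (hE : E ∈ FP z) {i j : ℕ} (hij : j ≤ i) {C : Finset (ℕ × ℕ)} (hC : Chn C)
    (hC2 : ∀ x ∈ C, x.1 ≠ x.2 ∧ x ∉ E ∧ x.swap ∉ E ∧ 1 ≤ x.1 ∧ x.1 ≤ i ∧ 1 ≤ x.2 ∧ x.2 ≤ j) :
    C.card ≤ rnk z i j := by
  obtain ⟨m, y, D, hm, hy, hst, ⟨hpos, hred⟩, hsw, rfl⟩ := hE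
  rcases Nat.lt_or_ge m i with hi | hi
  · obtain ⟨y0, yy, -, yt⟩ := hy
    have hp : ∀ a, a ≤ m → z a ≤ m := by
      intro a ha
      rw [hst.1 a ha]
      by_contra hc
      have := yt (y a) (by omega)
      rw [perm_sq_apply yy] at this
      omega
    have ht : ∀ a, m < a → z a = oneFPF a := by
      intro a ha
      rw [Nat.even_iff] at hm
      rcases Nat.even_or_odd a with g | g
      · rw [Nat.even_iff] at g
        have := (hst.2 ((a - m - 2) / 2)).2
        rw [show m + 2 * ((a - m - 2) / 2) + 2 = a by omega] at this
        rw [this]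
        unfold oneFPF
        split_ifs <;> omega
      · rw [Nat.odd_iff] at g
        have := (hst.2 ((a - m - 1) / 2)).1
        rw [show m + 2 * ((a - m - 1) / 2) + 1 = a by omega] at this
        rw [this]
        unfold oneFPF
        split_ifs
        omega
    have c := hC.card_le_cols (a := 0) (b := j) (fun x hx => by have := hC2 x hx; omega)
    rcases rnk_tail hm hz0 h2 hp ht hij hi with t | ⟨rfl, t1, t2⟩
    · omega
    · have := hC.odd_square (B := fun x => x.1 = x.2) (fun x hx => by simpa using hx.symm)
        (fun x hx => hx) (lo := 0) (hi := i)
        (fun x hx => by have := hC2 x hx; refine ⟨this.1, ?_⟩; omega) (by simpa using t1)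
      omega
  · have := chain_le_word hpos hC (i := i) (j := j) (by
      intro x hx
      have h3 := hC2 x hx
      refine ⟨?_, h3.2.2.2⟩
      intro hxD
      rcases lt_or_gt_of_ne h3.1 with g | g
      · apply h3.2.2.1
        rw [Finset.mem_filter]
        refine ⟨?_, by simpa using g⟩
        rw [← hsw]
        exact Finset.mem_image_of_mem _ hxD
      · exact h3.2.1 (Finset.mem_filter.mpr ⟨hxD, g⟩))
    rw [hred.2.1] at this
    rw [rnk_congr (w' := y) j (fun a _ ha => hst.1 a (by omega))]
    exact this

theorem emb_eq {n r k : ℕ} (f : Fin r → Fin n) (hf : StrictMono f) (A : Finset (Fin n))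
    (hA : ∀ t, f t ∈ A) (h : A.card = k) (hr : k = r) (t : Fin k) :
    A.orderEmbOfFin h t = f (Fin.cast hr t) := by
  subst hr
  exact (congrFun (Finset.orderEmbOfFin_unique h hA hf) t).symm

theorem chain_to_AB {n : ℕ} {C : Finset (ℕ × ℕ)} (hC : Chn C)
    (hC2 : ∀ x ∈ C, 1 ≤ x.1 ∧ x.1 ≤ n ∧ 1 ≤ x.2 ∧ x.2 ≤ n) :
    ∃ (A B : Finset (Fin n)) (h : A.card = B.card), A.card = C.card ∧
      ∀ t : Fin A.card, ((A.orderEmbOfFin rfl t : ℕ) + 1,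
        (B.orderEmbOfFin h.symm t.rev : ℕ) + 1) ∈ C := by
  have hcard : (C.image Prod.fst).card = C.card := by
    apply Finset.card_image_of_injOn
    intro x hx y hy hxy
    rcases hC x hx y hy with h | h | h
    · exact h
    · omega
    · omega
  have hex : ∀ t : Fin C.card, ∃ x ∈ C, x.1 = (C.image Prod.fst).orderEmbOfFin hcard t := by
    intro t
    have := Finset.orderEmbOfFin_mem (C.image Prod.fst) hcard t
    rw [Finset.mem_image] at this
    obtain ⟨x, hx, h⟩ := this
    exact ⟨x, hx, h⟩
  choose c hc1 hc2 using hex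
  have hlt : ∀ s t, s < t → (c s).1 < (c t).1 ∧ (c t).2 < (c s).2 := by
    intro s t hst
    have h1 : (c s).1 < (c t).1 := by
      rw [hc2, hc2]
      exact (Finset.orderEmbOfFin _ hcard).strictMono hst
    refine ⟨h1, ?_⟩
    rcases hC _ (hc1 s) _ (hc1 t) with h | h | h
    · rw [h] at h1; omega
    · exact h.2
    · omega
  let fa : Fin C.card → Fin n := fun t => ⟨(c t).1 - 1, by have := hC2 _ (hc1 t); omega⟩
  let fb : Fin C.card → Fin n := fun t => ⟨(c t.rev).2 - 1, by have := hC2 _ (hc1 t.rev); omega⟩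
  have ma : StrictMono fa := by
    intro s t hst
    have := hlt s t hst
    have := hC2 _ (hc1 s)
    simp only [fa, Fin.mk_lt_mk]
    omega
  have mb : StrictMono fb := by
    intro s t hst
    have := hlt t.rev s.rev (Fin.rev_lt_rev.mpr hst)
    have := hC2 _ (hc1 s.rev)
    simp only [fb, Fin.mk_lt_mk]
    omega
  have ca : (Finset.univ.image fa).card = C.card := by
    rw [Finset.card_image_of_injective _ ma.injective, Finset.card_univ, Fintype.card_fin]
  have cb : (Finset.univ.image fb).card = C.card := by
    rw [Finset.card_image_of_injective _ mb.injective, Finset.card_univ, Fintype.card_fin]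
  refine ⟨Finset.univ.image fa, Finset.univ.image fb, ca.trans cb.symm, ca, ?_⟩
  intro t
  rw [emb_eq fa ma _ (fun t => Finset.mem_image_of_mem _ (Finset.mem_univ t)) rfl ca,
    emb_eq fb mb _ (fun t => Finset.mem_image_of_mem _ (Finset.mem_univ t)) _ ca]
  have e : (Fin.cast ca t.rev).rev = Fin.cast ca t := by
    apply Fin.ext
    simp only [Fin.val_rev, Fin.val_cast]
    have := t.2
    omega
  simp only [fa, fb, e]
  have := hC2 _ (hc1 (Fin.cast ca t))
  rw [Nat.sub_add_cancel this.1, Nat.sub_add_cancel this.2.2.1]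
  exact hc1 _

theorem AB_to_chain {n : ℕ} (A B : Finset (Fin n)) (h : A.card = B.card) :
    ∃ C : Finset (ℕ × ℕ), Chn C ∧ C.card = A.card ∧ ∀ x ∈ C, ∃ t : Fin A.card,
      x = ((A.orderEmbOfFin rfl t : ℕ) + 1, (B.orderEmbOfFin h.symm t.rev : ℕ) + 1) := by
  have hlt : ∀ s t : Fin A.card, s < t →
      (A.orderEmbOfFin rfl s : ℕ) < (A.orderEmbOfFin rfl t : ℕ) ∧
      (B.orderEmbOfFin h.symm t.rev : ℕ) < (B.orderEmbOfFin h.symm s.rev : ℕ) := by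
    intro s t hst
    exact ⟨(A.orderEmbOfFin rfl).strictMono hst,
      (B.orderEmbOfFin h.symm).strictMono (Fin.rev_lt_rev.mpr hst)⟩
  refine ⟨Finset.univ.image fun t : Fin A.card =>
    ((A.orderEmbOfFin rfl t : ℕ) + 1, (B.orderEmbOfFin h.symm t.rev : ℕ) + 1), ?_, ?_, ?_⟩
  · intro x hx y hy
    rw [Finset.mem_image] at hx hy
    obtain ⟨s, -, rfl⟩ := hx
    obtain ⟨t, -, rfl⟩ := hy
    rcases lt_trichotomy s t with g | g | g
    · right; left; have := hlt s t g; simp only; omega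
    · left; rw [g]
    · right; right; have := hlt t s g; simp only; omega
  · rw [Finset.card_image_of_injective, Finset.card_univ, Fintype.card_fin]
    intro s t hst
    simp only [Prod.mk.injEq] at hst
    rcases lt_trichotomy s t with g | g | g
    · have := hlt s t g; omega
    · exact g
    · have := hlt t s g; omega
  · intro x hx
    rw [Finset.mem_image] at hx
    obtain ⟨s, -, rfl⟩ := hx
    exact ⟨s, rfl⟩

/-- The variables occurring in `ussMon`. -/
noncomputable def varSet {n : ℕ} (A B : Finset (Fin n)) (h : A.card = B.card) :
    Finset (SSVar n) :=
  Finset.univ.filter (fun v : SSVar n => ∃ t : Fin A.card,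
          (A.orderEmbOfFin rfl t = v.1.1 ∧ B.orderEmbOfFin h.symm t.rev = v.1.2) ∨
          (A.orderEmbOfFin rfl t = v.1.2 ∧ B.orderEmbOfFin h.symm t.rev = v.1.1))

theorem comb {n : ℕ} {z : Equiv.Perm ℕ} (hz : z ∈ FPFIn n) (P : SSVar n → Prop) :
    (∃ (i j : ℕ) (A B : Finset (Fin n)) (h : A.card = B.card), 1 ≤ j ∧ j ≤ i ∧ i ≤ n ∧
      (∀ a ∈ A, (a : ℕ) + 1 ≤ i) ∧ (∀ b ∈ B, (b : ℕ) + 1 ≤ j) ∧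
      A.card = rnk z i j + 1 ∧
      (¬ ∃ t : Fin A.card, (A.orderEmbOfFin rfl t : Fin n) = B.orderEmbOfFin h.symm t.rev) ∧
      ∀ v ∈ varSet A B h, P v) ↔
    ∀ D ∈ FP z, ∃ v : SSVar n, ((v.1.1 : ℕ) + 1, (v.1.2 : ℕ) + 1) ∈ D ∧ P v := by
  constructor
  · rintro ⟨i, j, A, B, h, hj, hji, hi, hA, hB, hc, hnd, hv⟩ D hD
    by_contra hcon
    push Not at hcon
    obtain ⟨C, hC, hCc, hCm⟩ := AB_to_chain A B h
    have hlow : ∀ x ∈ D, x.2 < x.1 := by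
      obtain ⟨m, y, D', -, -, -, -, -, rfl⟩ := hD
      intro x hx
      exact (Finset.mem_filter.mp hx).2
    have := backward hz.1.1 hz.1.2.2.1 hD hji hC (by
      intro x hx
      obtain ⟨t, rfl⟩ := hCm x hx
      have ha := hA _ (Finset.orderEmbOfFin_mem A rfl t)
      have hb := hB _ (Finset.orderEmbOfFin_mem B h.symm t.rev)
      refine ⟨?_, ?_, ?_, by simp, ha, by simp, hb⟩
      · intro e
        apply hnd
        refine ⟨t, Fin.ext ?_⟩
        simp only at e
        omega
      · intro hx2
        have hl := hlow _ hx2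
        simp only at hl
        have hl2 : B.orderEmbOfFin h.symm t.rev < A.orderEmbOfFin rfl t := by
          rw [Fin.lt_def]; omega
        refine hcon ⟨(_, _), hl2⟩ hx2 (hv _ ?_)
        unfold varSet
        rw [Finset.mem_filter]
        exact ⟨Finset.mem_univ _, t, Or.inl ⟨rfl, rfl⟩⟩
      · intro hx2
        have hl := hlow _ hx2
        simp only [Prod.fst_swap, Prod.snd_swap] at hl
        have hl2 : A.orderEmbOfFin rfl t < B.orderEmbOfFin h.symm t.rev := by
          rw [Fin.lt_def]; omega
        refine hcon ⟨(_, _), hl2⟩ hx2 (hv _ ?_)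
        unfold varSet
        rw [Finset.mem_filter]
        exact ⟨Finset.mem_univ _, t, Or.inr ⟨rfl, rfl⟩⟩)
    omega
  · intro hD
    by_contra hcon
    obtain ⟨E, hE, hEF⟩ := forward hz
      {x | ∃ v : SSVar n, x = ((v.1.1 : ℕ) + 1, (v.1.2 : ℕ) + 1) ∧ ¬ P v} (by
        intro i j hj hji hi C hC hC2
        by_contra hlt
        apply hcon
        obtain ⟨C', hC's, hC'c⟩ := Finset.exists_subset_card_eq
          (show rnk z i j + 1 ≤ C.card by omega)
        obtain ⟨A, B, h, hAc, hm⟩ := chain_to_AB (n := n) (hC.subset hC's) (by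
          intro x hx
          have := hC2 x (hC's hx)
          omega)
        have hm2 := fun t => hC2 _ (hC's (hm t))
        refine ⟨i, j, A, B, h, hj, hji, hi, ?_, ?_, by omega, ?_, ?_⟩
        · intro a ha
          have : a ∈ Set.range (A.orderEmbOfFin rfl) := by
            rw [Finset.range_orderEmbOfFin]; exact ha
          obtain ⟨t, rfl⟩ := this
          exact (hm2 t).2.2.1
        · intro b hb
          have : b ∈ Set.range (B.orderEmbOfFin h.symm) := by
            rw [Finset.range_orderEmbOfFin]; exact hb
          obtain ⟨t, rfl⟩ := this
          have := (hm2 t.rev).2.2.2.2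
          rw [Fin.rev_rev] at this
          exact this
        · rintro ⟨t, ht⟩
          apply (hm2 t).1
          left
          simp only [ht]
        · intro v hv
          unfold varSet at hv
          rw [Finset.mem_filter] at hv
          obtain ⟨-, t, ⟨e1, e2⟩ | ⟨e1, e2⟩⟩ := hv
          · by_contra hP
            apply (hm2 t).1
            right; left
            exact ⟨v, by rw [e1, e2], hP⟩
          · by_contra hP
            apply (hm2 t).1
            right; right
            exact ⟨v, by rw [e1, e2]; rfl, hP⟩) (by
        rintro x ⟨v, rfl, -⟩
        have := v.2
        rw [Fin.lt_def] at this
        simp only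
        omega)
    obtain ⟨v, hv, hP⟩ := hD E hE
    obtain ⟨v', e, hP'⟩ := hEF _ hv
    apply hP'
    have : v' = v := by
      simp only [Prod.mk.injEq] at e
      apply Subtype.ext
      exact Prod.ext (Fin.ext (by omega)) (Fin.ext (by omega))
    rw [this]
    exact hP

theorem prod_X_eq {K : Type*} [CommRing K] {n : ℕ} (G : Finset (SSVar n)) :
    ∏ v ∈ G, (MvPolynomial.X v : MvPolynomial (SSVar n) K) =
      MvPolynomial.monomial (∑ v ∈ G, Finsupp.single v 1) 1 := by
  rw [MvPolynomial.monomial_sum_one]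
  rfl

theorem sum_single_le {n : ℕ} (G : Finset (SSVar n)) (x : SSVar n →₀ ℕ) :
    ∑ v ∈ G, Finsupp.single v 1 ≤ x ↔ ∀ v ∈ G, x v ≠ 0 := by
  classical
  have key : ∀ w, (∑ v ∈ G, Finsupp.single v 1 : SSVar n →₀ ℕ) w = if w ∈ G then 1 else 0 := by
    intro w
    rw [Finsupp.finsetSum_apply]
    simp [Finsupp.single_apply]
  rw [Finsupp.le_def]
  constructor
  · intro h v hv
    have := h v
    rw [key, if_pos hv] at this
    omega
  · intro h w
    rw [key]
    split_ifs with hw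
    · have := h w hw; omega
    · omega

theorem Jss_eq (K : Type*) [CommRing K] (n : ℕ) (z : Equiv.Perm ℕ) :
    JssIdeal K n z = Ideal.span ((fun s => MvPolynomial.monomial s (1 : K)) ''
      {s : SSVar n →₀ ℕ | ∃ (i j : ℕ) (A B : Finset (Fin n)) (h : A.card = B.card),
      1 ≤ j ∧ j ≤ i ∧ i ≤ n ∧
      (∀ a ∈ A, (a : ℕ) + 1 ≤ i) ∧ (∀ b ∈ B, (b : ℕ) + 1 ≤ j) ∧
      A.card = rnk z i j + 1 ∧
      (¬ ∃ t : Fin A.card, (A.orderEmbOfFin rfl t : Fin n) = B.orderEmbOfFin h.symm t.rev) ∧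
      s = ∑ v ∈ varSet A B h, Finsupp.single v 1}) := by
  unfold JssIdeal JssIdealOfTable
  apply le_antisymm
  · rw [Ideal.span_le]
    rintro g ⟨i, j, A, B, h1, h2, h3, h4, h5, h6, h7, rfl⟩
    unfold ussMon
    rw [dif_pos (h6.trans h7.symm)]
    split_ifs with hd
    · exact Ideal.zero_mem _
    · apply Ideal.subset_span
      refine ⟨_, ⟨i, j, A, B, h6.trans h7.symm, h1, h2, h3, h4, h5, h6, hd, rfl⟩, ?_⟩
      simp only
      rw [← prod_X_eq]
      rfl
  · apply Ideal.span_mono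
    rintro g ⟨s, ⟨i, j, A, B, h, h1, h2, h3, h4, h5, h6, hd, rfl⟩, rfl⟩
    refine ⟨i, j, A, B, h1, h2, h3, h4, h5, h6, h ▸ h6, ?_⟩
    unfold ussMon
    rw [dif_pos h, if_neg hd]
    simp only
    rw [← prod_X_eq]
    rfl

/-- For `z ∈ FPF_n(I_n)`, the ideal `J^ss_z` equals the intersection,
over all fpf-involution pipe dreams `D ∈ FP(z)`, of the ideals `(u_{ij} : (i,j) ∈ D)`. -/
theorem statement7 (K : Type*) [Field K] [IsAlgClosed K] (n : ℕ) (hn : 1 ≤ n)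
    (z : Equiv.Perm ℕ) (hz : z ∈ FPFIn n) :
    JssIdeal K n z = ⨅ D ∈ FP z,
      Ideal.span {g : MvPolynomial (SSVar n) K |
        ∃ v : SSVar n, ((v.1.1 : ℕ) + 1, (v.1.2 : ℕ) + 1) ∈ D ∧ g = MvPolynomial.X v} := by
  have hX : ∀ D : Finset (ℕ × ℕ), {g : MvPolynomial (SSVar n) K |
        ∃ v : SSVar n, ((v.1.1 : ℕ) + 1, (v.1.2 : ℕ) + 1) ∈ D ∧ g = MvPolynomial.X v} =
      MvPolynomial.X '' {v : SSVar n | ((v.1.1 : ℕ) + 1, (v.1.2 : ℕ) + 1) ∈ D} := by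
    intro D
    ext g
    constructor
    · rintro ⟨v, hv, rfl⟩
      exact ⟨v, hv, rfl⟩
    · rintro ⟨v, hv, rfl⟩
      exact ⟨v, hv, rfl⟩
  rw [Jss_eq]
  ext f
  simp only [Ideal.mem_iInf, hX]
  rw [MvPolynomial.mem_ideal_span_monomial_image]
  simp only [MvPolynomial.mem_ideal_span_X_image]
  have key : ∀ x : SSVar n →₀ ℕ, _ := fun x => comb hz (fun v => x v ≠ 0)
  constructor
  · intro H D hD x hx
    obtain ⟨s, ⟨i, j, A, B, h, h1, h2, h3, h4, h5, h6, hd, rfl⟩, hle⟩ := H x hx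
    rw [sum_single_le] at hle
    obtain ⟨v, hv, hv2⟩ := (key x).1 ⟨i, j, A, B, h, h1, h2, h3, h4, h5, h6, hd, hle⟩ D hD
    exact ⟨v, hv, hv2⟩
  · intro H x hx
    obtain ⟨i, j, A, B, h, h1, h2, h3, h4, h5, h6, hd, hle⟩ := (key x).2 (fun D hD => by
      obtain ⟨v, hv, hv2⟩ := H D hD x hx
      exact ⟨v, hv, hv2⟩)
    exact ⟨_, ⟨i, j, A, B, h, h1, h2, h3, h4, h5, h6, hd, rfl⟩, (sum_single_le _ _).2 hle⟩

end Paper
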